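/- arXiv:1502.05454 — 2 statements merged into one kernel-verified Lean document; each statement's English description precedes it below -/
import Mathlib

section
/- Let T > 0, let λ ∈ ℂ with λ ≠ (2πn/T)² for every integer n ≥ 0, and let f ∈ L²([0,T]; ℂ). Define y(x) = ∫₀ᵀ G(λ; x, t) f(t) dt for x ∈ [0,T]. Then y is continuously differentiable on [0,T], y′(x) = y′(0) + ∫₀ˣ ( −λ y(t) − f(t) ) dt for all x ∈ [0,T] (i.e. y solves −y″ − λ y = f), and y satisfies the periodic boundary conditions y(0) = y(T) and y′(0) = y′(T). -/
open MeasureTheory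

/-- The Green's function of `-d²/dx²` with periodic boundary conditions on `[0,T]`:
`G(λ; x, t) = -(1/(2√λ)) cos(√λ (T/2 - |x - t|)) / sin(√λ T/2)`. -/
noncomputable def periodicGreen (T : ℝ) (lam : ℂ) (x t : ℝ) : ℂ :=
  -(1 / (2 * lam ^ ((1:ℂ)/2))) *
    Complex.cos (lam ^ ((1:ℂ)/2) * ((T / 2 - |x - t| : ℝ) : ℂ)) /
    Complex.sin (lam ^ ((1:ℂ)/2) * ((T : ℂ) / 2))

/-- Even kernel `cos (s (T/2 - |u|))`. -/
noncomputable def kerC (T : ℝ) (s : ℂ) (u : ℝ) : ℂ :=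
  Complex.cos (s * ((T / 2 - |u| : ℝ) : ℂ))

/-- Continuous part of the odd kernel `sgn u * sin (s (T/2 - |u|))`. -/
noncomputable def kerS (T : ℝ) (s : ℂ) (u : ℝ) : ℂ :=
  Complex.sin (s * ((T / 2 - max u 0 : ℝ) : ℂ)) - Complex.sin (s * ((T / 2 + min u 0 : ℝ) : ℂ))

lemma conv_hasDerivAt (T : ℝ) (f : ℝ → ℂ)
    (hf : IntervalIntegrable f volume 0 T) (k k' : ℝ → ℂ) (hk : LocallyLipschitz k)
    (hk' : Measurable k') (hd : ∀ u, u ≠ 0 → HasDerivAt k (k' u) u) (x : ℝ) :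
    HasDerivAt (fun x => ∫ t in (0:ℝ)..T, k (x - t) * f t)
      (∫ t in (0:ℝ)..T, k' (x - t) * f t) x := by
  have hkc := hk.continuous
  have hfm : AEStronglyMeasurable f (volume.restrict (Set.uIoc 0 T)) :=
    hf.def'.aestronglyMeasurable
  obtain ⟨K, hK⟩ := (hk.locallyLipschitzOn
    (s := Metric.closedBall (0:ℝ) (|x| + 1 + |T|))).exists_lipschitzOnWith_of_compact
    (isCompact_closedBall _ _)
  refine (intervalIntegral.hasDerivAt_integral_of_dominated_loc_of_lip
    (F := fun x t => k (x - t) * f t) (F' := fun t => k' (x - t) * f t)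
    (bound := fun t => K * ‖f t‖)
    (s := Metric.ball x 1) (Metric.ball_mem_nhds x one_pos) ?_ ?_ ?_ ?_ ?_ ?_).2
  · filter_upwards with z
    exact (Continuous.aestronglyMeasurable (by fun_prop)).mul hfm
  · exact hf.continuousOn_mul (Continuous.continuousOn (by fun_prop))
  · exact (Measurable.aestronglyMeasurable (by fun_prop)).mul hfm
  · filter_upwards with t ht
    have ht' : |t| ≤ |T| := by
      rcases Set.mem_uIoc.1 ht with h | h
      · rw [abs_of_pos h.1, abs_of_pos (h.1.trans_le h.2)]; exact h.2
      · rw [abs_of_nonpos h.2, abs_of_neg (h.1.trans_le h.2)]; linarith [h.1]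
    have hmem : ∀ z ∈ Metric.ball x 1, z - t ∈ Metric.closedBall (0:ℝ) (|x| + 1 + |T|) := by
      intro z hz
      rw [Metric.mem_ball, Real.dist_eq] at hz
      rw [Metric.mem_closedBall, Real.dist_eq, sub_zero]
      have h1 : |z - t| ≤ |z| + |t| := abs_sub z t
      have h2 : |z| ≤ |z - x| + |x| := by simpa using abs_add_le (z - x) x
      linarith
    refine LipschitzOnWith.of_dist_le_mul fun a ha b hb => ?_
    have h := hK.dist_le_mul _ (hmem a ha) _ (hmem b hb)
    rw [dist_eq_norm] at h ⊢
    rw [← sub_mul, norm_mul]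
    have e : dist (a - t) (b - t) = dist a b := by simp
    rw [e] at h
    have e2 : ((Real.nnabs (K * ‖f t‖) : NNReal) : ℝ) = K * ‖f t‖ := by
      rw [Real.coe_nnabs, abs_of_nonneg (by positivity)]
    rw [e2]
    calc _ ≤ (K * dist a b) * ‖f t‖ := by gcongr
      _ = _ := by ring
  · exact hf.norm.const_mul _
  · have : ∀ᵐ t : ℝ ∂volume, t ≠ x := by simp [ae_iff]
    filter_upwards [this] with t ht _
    have h := (hd (x - t) (sub_ne_zero.2 ht.symm)).comp_sub_const x t
    exact h.mul_const _

lemma kerC_lip (T : ℝ) (s : ℂ) : LocallyLipschitz (kerC T s) := by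
  have h1 : ContDiff ℝ 1 (fun v : ℝ => Complex.cos (s * ((T / 2 - v : ℝ) : ℂ))) := by
    have : ContDiff ℝ 1 (fun v : ℝ => ((T / 2 - v : ℝ) : ℂ)) :=
      Complex.ofRealCLM.contDiff.comp (contDiff_const.sub contDiff_id)
    exact (Complex.contDiff_cos.restrict_scalars ℝ).comp (contDiff_const.mul this)
  exact h1.locallyLipschitz.comp
    (lipschitzWith_one_norm (E := ℝ)).locallyLipschitz

lemma kerS_lip (T : ℝ) (s : ℂ) : LocallyLipschitz (kerS T s) := by
  have h1 : ContDiff ℝ 1 (fun v : ℝ => Complex.sin (s * ((T / 2 - v : ℝ) : ℂ))) := by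
    have : ContDiff ℝ 1 (fun v : ℝ => ((T / 2 - v : ℝ) : ℂ)) :=
      Complex.ofRealCLM.contDiff.comp (contDiff_const.sub contDiff_id)
    exact (Complex.contDiff_sin.restrict_scalars ℝ).comp (contDiff_const.mul this)
  have h2 : ContDiff ℝ 1 (fun v : ℝ => Complex.sin (s * ((T / 2 + v : ℝ) : ℂ))) := by
    have : ContDiff ℝ 1 (fun v : ℝ => ((T / 2 + v : ℝ) : ℂ)) :=
      Complex.ofRealCLM.contDiff.comp (contDiff_const.add contDiff_id)
    exact (Complex.contDiff_sin.restrict_scalars ℝ).comp (contDiff_const.mul this)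
  exact (h1.locallyLipschitz.comp (LocallyLipschitz.id.max_const 0)).sub
    (h2.locallyLipschitz.comp (LocallyLipschitz.id.min_const 0))

lemma kerC_deriv (T : ℝ) (s : ℂ) (u : ℝ) (hu : u ≠ 0) :
    HasDerivAt (kerC T s)
      (s * (kerS T s u + (if 0 < u then 1 else -1) * Complex.sin (s * (T / 2)))) u := by
  rcases lt_or_gt_of_ne hu with h | h
  · have h0 : HasDerivAt (fun v : ℝ => s * ((T / 2 + v : ℝ) : ℂ)) (s * ((1:ℝ):ℂ)) u :=
      (((hasDerivAt_id u).const_add (T / 2)).ofReal_comp).const_mul s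
    have h1 := (Complex.hasDerivAt_cos _).comp u h0
    have e : kerC T s =ᶠ[nhds u] fun v : ℝ => Complex.cos (s * ((T / 2 + v : ℝ) : ℂ)) := by
      filter_upwards [Iio_mem_nhds h] with v hv
      simp only [kerC, abs_of_neg (show v < 0 from hv), sub_neg_eq_add]
    refine (h1.congr_of_eventuallyEq e).congr_deriv ?_
    simp only [kerS, max_eq_right h.le, min_eq_left h.le, not_lt.2 h.le, if_false]
    push_cast; rw [sub_zero]; ring
  · have h0 : HasDerivAt (fun v : ℝ => s * ((T / 2 - v : ℝ) : ℂ)) (s * ((-1:ℝ):ℂ)) u :=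
      (((hasDerivAt_id u).const_sub (T / 2)).ofReal_comp).const_mul s
    have h1 := (Complex.hasDerivAt_cos _).comp u h0
    have e : kerC T s =ᶠ[nhds u] fun v : ℝ => Complex.cos (s * ((T / 2 - v : ℝ) : ℂ)) := by
      filter_upwards [Ioi_mem_nhds h] with v hv
      simp only [kerC, abs_of_pos (show 0 < v from hv)]
    refine (h1.congr_of_eventuallyEq e).congr_deriv ?_
    simp only [kerS, max_eq_left h.le, min_eq_right h.le, h, if_true]
    push_cast; rw [add_zero]; ring

lemma kerS_deriv (T : ℝ) (s : ℂ) (u : ℝ) (hu : u ≠ 0) :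
    HasDerivAt (kerS T s) (-s * kerC T s u) u := by
  rcases lt_or_gt_of_ne hu with h | h
  · have h0 : HasDerivAt (fun v : ℝ => s * ((T / 2 + v : ℝ) : ℂ)) (s * ((1:ℝ):ℂ)) u :=
      (((hasDerivAt_id u).const_add (T / 2)).ofReal_comp).const_mul s
    have h1 := ((Complex.hasDerivAt_sin _).comp u h0).const_sub (Complex.sin (s * ((T / 2 - 0 : ℝ) : ℂ)))
    have e : kerS T s =ᶠ[nhds u] fun v : ℝ => Complex.sin (s * ((T / 2 - 0 : ℝ) : ℂ))
        - Complex.sin (s * ((T / 2 + v : ℝ) : ℂ)) := by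
      filter_upwards [Iio_mem_nhds h] with v hv
      have hv' : v ≤ 0 := le_of_lt hv
      simp only [kerS, max_eq_right hv', min_eq_left hv']
    refine (h1.congr_of_eventuallyEq e).congr_deriv ?_
    simp only [kerC, abs_of_neg h, sub_neg_eq_add]
    push_cast; ring
  · have h0 : HasDerivAt (fun v : ℝ => s * ((T / 2 - v : ℝ) : ℂ)) (s * ((-1:ℝ):ℂ)) u :=
      (((hasDerivAt_id u).const_sub (T / 2)).ofReal_comp).const_mul s
    have h1 := ((Complex.hasDerivAt_sin _).comp u h0).sub_const (Complex.sin (s * ((T / 2 + 0 : ℝ) : ℂ)))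
    have e : kerS T s =ᶠ[nhds u] fun v : ℝ => Complex.sin (s * ((T / 2 - v : ℝ) : ℂ))
        - Complex.sin (s * ((T / 2 + 0 : ℝ) : ℂ)) := by
      filter_upwards [Ioi_mem_nhds h] with v hv
      have hv' : 0 ≤ v := le_of_lt hv
      simp only [kerS, max_eq_left hv', min_eq_right hv']
    refine (h1.congr_of_eventuallyEq e).congr_deriv ?_
    simp only [kerC, abs_of_pos h]
    push_cast; ring

lemma sgn_int (T : ℝ) (f : ℝ → ℂ) (hf : IntervalIntegrable f volume 0 T)
    (x : ℝ) (hx : x ∈ Set.Icc 0 T) :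
    IntervalIntegrable (fun t => (if 0 < x - t then (1:ℂ) else -1) * f t) volume 0 T ∧
    ∫ t in (0:ℝ)..T, (if 0 < x - t then (1:ℂ) else -1) * f t =
      2 * (∫ t in (0:ℝ)..x, f t) - ∫ t in (0:ℝ)..T, f t := by
  have hT : 0 ≤ T := hx.1.trans hx.2
  have h1 : IntervalIntegrable f volume 0 x := hf.mono_set (by
    rw [Set.uIcc_of_le hx.1, Set.uIcc_of_le hT]; exact Set.Icc_subset_Icc le_rfl hx.2)
  have h2 : IntervalIntegrable f volume x T := hf.mono_set (by
    rw [Set.uIcc_of_le hx.2, Set.uIcc_of_le hT]; exact Set.Icc_subset_Icc hx.1 le_rfl)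
  have hne : ∀ᵐ t : ℝ ∂volume, t ≠ x := by simp [ae_iff]
  have e1 : ∀ᵐ t : ℝ ∂volume, t ∈ Set.uIoc 0 x →
      f t = (if 0 < x - t then (1:ℂ) else -1) * f t := by
    filter_upwards [hne] with t ht h
    rw [Set.uIoc_of_le hx.1] at h
    rw [if_pos (sub_pos.2 (lt_of_le_of_ne h.2 ht)), one_mul]
  have e2 : ∀ᵐ t : ℝ ∂volume, t ∈ Set.uIoc x T →
      -f t = (if 0 < x - t then (1:ℂ) else -1) * f t := by
    filter_upwards with t h
    rw [Set.uIoc_of_le hx.2] at h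
    rw [if_neg (by linarith [h.1]), neg_one_mul]
  have i1 : IntervalIntegrable (fun t => (if 0 < x - t then (1:ℂ) else -1) * f t) volume 0 x :=
    h1.congr_ae ((ae_restrict_iff' measurableSet_uIoc).2 e1)
  have i2 : IntervalIntegrable (fun t => (if 0 < x - t then (1:ℂ) else -1) * f t) volume x T :=
    h2.neg.congr_ae ((ae_restrict_iff' measurableSet_uIoc).2 e2)
  refine ⟨i1.trans i2, ?_⟩
  rw [← intervalIntegral.integral_add_adjacent_intervals i1 i2,
    ← intervalIntegral.integral_congr_ae e1, ← intervalIntegral.integral_congr_ae e2,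
    ← intervalIntegral.integral_add_adjacent_intervals h1 h2, intervalIntegral.integral_neg]
  ring

/-- For `T > 0`, `λ ∈ ℂ` with `λ ≠ (2πn/T)²` for every integer `n ≥ 0`,
and `f ∈ L²([0,T];ℂ)`, the function `y(x) = ∫₀ᵀ G(λ;x,t) f(t) dt` is continuously
differentiable on `[0,T]`, solves `-y'' - λ y = f` in the integrated sense, and
satisfies the periodic boundary conditions `y(0) = y(T)`, `y'(0) = y'(T)`. -/
theorem periodicGreen_solves_bvp
    (T : ℝ) (hT : 0 < T) (lam : ℂ)
    (hlam : ∀ n : ℕ, lam ≠ (((2 * Real.pi * n / T : ℝ) : ℂ)) ^ 2)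
    (f : ℝ → ℂ)
    (hf : IntervalIntegrable f volume 0 T)
    (hf2 : IntervalIntegrable (fun t => ‖f t‖ ^ 2) volume 0 T)
    (y : ℝ → ℂ)
    (hy : ∀ x : ℝ, y x = ∫ t in (0:ℝ)..T, periodicGreen T lam x t * f t) :
    ∃ yd : ℝ → ℂ,
      (∀ x ∈ Set.Icc (0:ℝ) T, HasDerivWithinAt y (yd x) (Set.Icc (0:ℝ) T) x) ∧
      ContinuousOn yd (Set.Icc (0:ℝ) T) ∧
      (∀ x ∈ Set.Icc (0:ℝ) T,
        yd x = yd 0 + ∫ t in (0:ℝ)..x, (-lam * y t - f t)) ∧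
      y 0 = y T ∧ yd 0 = yd T := by
  obtain ⟨s, hs⟩ : ∃ s : ℂ, s = lam ^ ((1:ℂ)/2) := ⟨_, rfl⟩
  have hs2 : s ^ 2 = lam := by
    rw [hs, one_div]; exact_mod_cast Complex.cpow_nat_inv_pow lam (n := 2) two_ne_zero
  have hs0 : s ≠ 0 := by
    rintro rfl
    apply hlam 0
    rw [← hs2]; simp
  obtain ⟨S, hS⟩ : ∃ S : ℂ, S = Complex.sin (s * ((T : ℂ) / 2)) := ⟨_, rfl⟩
  have hS0 : S ≠ 0 := by
    intro h0
    rw [hS, Complex.sin_eq_zero_iff] at h0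
    obtain ⟨k, hk⟩ := h0
    apply hlam k.natAbs
    have hTc : (T : ℂ) ≠ 0 := by exact_mod_cast hT.ne'
    have e : s = 2 * Real.pi * k / T := by
      field_simp
      linear_combination 2 * hk
    have e3 : ((k.natAbs : ℕ) : ℂ) ^ 2 = (k : ℂ) ^ 2 := by
      have := congrArg (Int.cast : ℤ → ℂ) (Int.natAbs_sq k)
      push_cast at this
      rw [← this]; simp
    rw [← hs2, e]
    push_cast
    rw [div_pow, div_pow, mul_pow, mul_pow _ ((k.natAbs : ℕ) : ℂ), e3]
  have hfT := hf
  have hYd := conv_hasDerivAt T f hf (kerC T s)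
    (fun u => s * (kerS T s u + (if 0 < u then 1 else -1) * S)) (kerC_lip T s)
    (by
      have := (kerS_lip T s).continuous.measurable
      have h3 : Measurable (fun u : ℝ => if 0 < u then (1:ℂ) else -1) :=
        Measurable.ite measurableSet_Ioi measurable_const measurable_const
      fun_prop)
    (by intro u hu; rw [hS]; exact kerC_deriv T s u hu)
  have hHd := conv_hasDerivAt T f hf (kerS T s) (fun u => -s * kerC T s u) (kerS_lip T s)
    (by
      have := (kerC_lip T s).continuous.measurable
      fun_prop) (kerS_deriv T s)
  obtain ⟨Y, hY⟩ : ∃ Y : ℝ → ℂ, Y = fun x => ∫ t in (0:ℝ)..T, kerC T s (x - t) * f t := ⟨_, rfl⟩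
  obtain ⟨H, hH⟩ : ∃ H : ℝ → ℂ, H = fun x => ∫ t in (0:ℝ)..T, kerS T s (x - t) * f t := ⟨_, rfl⟩
  obtain ⟨F, hF⟩ : ∃ F : ℂ, F = ∫ t in (0:ℝ)..T, f t := ⟨_, rfl⟩
  have hSi : ∀ x, IntervalIntegrable (fun t => kerS T s (x - t) * f t) volume 0 T := fun x =>
    hf.continuousOn_mul (Continuous.continuousOn (by
      have := (kerS_lip T s).continuous
      fun_prop))
  rw [← hY] at hYd
  rw [← hH] at hHd
  have hHd' : ∀ x, HasDerivAt H (-s * Y x) x := by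
    intro x
    convert hHd x using 1
    rw [hY, ← intervalIntegral.integral_const_mul]
    simp only [mul_assoc]
  have hYd' : ∀ x ∈ Set.Icc 0 T,
      HasDerivAt Y (s * (H x + S * (2 * (∫ t in (0:ℝ)..x, f t) - F))) x := by
    intro x hx
    convert hYd x using 1
    obtain ⟨i1, i2⟩ := sgn_int T f hf x hx
    rw [hF, ← i2, hH, ← intervalIntegral.integral_const_mul,
      ← intervalIntegral.integral_add (hSi x) (i1.const_mul S),
      ← intervalIntegral.integral_const_mul]
    congr 1; ext t; ring
  have hyY : ∀ x, y x = -(1 / (2 * s * S)) * Y x := by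
    intro x
    rw [hy, hY, ← intervalIntegral.integral_const_mul]
    congr 1; ext t
    rw [periodicGreen, ← hs, ← hS, kerC]
    field_simp
  have hyf : y = fun x => -(1 / (2 * s * S)) * Y x := funext hyY
  have hYc : Continuous Y := by
    rw [hY]
    exact continuous_iff_continuousAt.2 fun x => (by rw [← hY]; exact (hYd x).continuousAt)
  have hsub : ∀ x ∈ Set.Icc 0 T, IntervalIntegrable f volume 0 x := fun x hx => hf.mono_set (by
    rw [Set.uIcc_of_le hx.1, Set.uIcc_of_le hT.le]; exact Set.Icc_subset_Icc le_rfl hx.2)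
  have hHc : Continuous H := continuous_iff_continuousAt.2 fun x => (hHd' x).continuousAt
  have hfc : ContinuousOn (fun x => ∫ t in (0:ℝ)..x, f t) (Set.Icc 0 T) := by
    have := intervalIntegral.continuousOn_primitive_interval (μ := volume) (f := f) (a := 0) (b := T)
      (by rw [Set.uIcc_of_le hT.le, integrableOn_Icc_iff_integrableOn_Ioc]
          exact (intervalIntegrable_iff_integrableOn_Ioc_of_le hT.le).1 hf)
    rwa [Set.uIcc_of_le hT.le] at this
  have hFTC : ∀ x, ∫ t in (0:ℝ)..x, Y t = -(1 / s) * (H x - H 0) := by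
    intro x
    have h := intervalIntegral.integral_eq_sub_of_hasDerivAt (a := 0) (b := x)
      (fun t _ => hHd' t) ((continuous_const.mul hYc).intervalIntegrable _ _)
    rw [intervalIntegral.integral_const_mul] at h
    rw [← h]; field_simp
  refine ⟨fun x => -(1 / (2 * S)) * (H x + S * (2 * (∫ t in (0:ℝ)..x, f t) - F)),
    ?_, ?_, ?_, ?_, ?_⟩
  · intro x hx
    rw [hyf]
    refine ((hYd' x hx).const_mul (-(1 / (2 * s * S)))).hasDerivWithinAt.congr_deriv ?_
    field_simp
  · have := hHc.continuousOn (s := Set.Icc 0 T)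
    fun_prop
  · intro x hx
    have e : ∫ t in (0:ℝ)..x, (-lam * y t - f t) =
        -lam * (-(1 / (2 * s * S)) * ∫ t in (0:ℝ)..x, Y t) - ∫ t in (0:ℝ)..x, f t := by
      rw [intervalIntegral.integral_sub _ (hsub x hx), intervalIntegral.integral_const_mul, hyf,
        intervalIntegral.integral_const_mul]
      rw [hyf]
      exact (Continuous.intervalIntegrable (by fun_prop) _ _)
    rw [e, hFTC, ← hs2]
    simp only [intervalIntegral.integral_same]
    field_simp
    ring
  · rw [hyY, hyY, hY]
    congr 1
    apply intervalIntegral.integral_congr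
    intro t ht
    rw [Set.uIcc_of_le hT.le] at ht
    simp only [kerC]
    rw [abs_of_nonpos (by linarith [ht.1] : 0 - t ≤ 0), abs_of_nonneg (sub_nonneg.2 ht.2),
      ← Complex.cos_neg]
    congr 2
    push_cast; ring
  · have e : H 0 - 2 * S * F = H T := by
      rw [hH, hF, ← intervalIntegral.integral_const_mul,
        ← intervalIntegral.integral_sub (hSi 0) (hf.const_mul _)]
      apply intervalIntegral.integral_congr
      intro t ht
      rw [Set.uIcc_of_le hT.le] at ht
      simp only [kerS]
      rw [max_eq_right (by linarith [ht.1] : 0 - t ≤ 0), min_eq_left (by linarith [ht.1] : 0 - t ≤ 0),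
        max_eq_left (sub_nonneg.2 ht.2), min_eq_right (sub_nonneg.2 ht.2), hS]
      have e1 : s * ((T / 2 - (T - t) : ℝ) : ℂ) = -(s * ((T / 2 + (0 - t) : ℝ) : ℂ)) := by
        push_cast; ring
      rw [e1, Complex.sin_neg]
      push_cast
      rw [sub_zero, add_zero]
      ring
    simp only [intervalIntegral.integral_same]
    rw [← e, ← hF]
    ring
end

section
/- For every Q > 0 there is a constant K ≥ 8, depending only on Q, with the following property. Let τ ∈ (0,1) and let (V_n)_{n≥1} be a sequence of potentials where V_n : ℝ → ℝ is T_n-periodic and locally square-integrable, with T_n ≥ 1 and T_n dividing T_{n+1} (i.e. T_{n+1}/T_n a positive integer) for every n, ‖V_n‖_B ≤ Q for every n, and Σ_{V_n} ⊆ [1, ∞) for every n. Assume Σ_{n=1}^∞ T_{n+1}^6 e^{K T_{n+1}} ‖V_n − V_{n+1}‖_B < (1 − τ)/(3 K⁴), where ‖V_n − V_{n+1}‖_B is computed over the period T_{n+1}. Set δ₀ = min( K^{−1} T₁^{−3} e^{−K T₁}, (1 − τ)/3 ). Then for every N ≥ 1, every x ∈ Σ_{V_N}, and every δ with 0 < δ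 ≤ δ₀, the Lebesgue measure of (x − δ, x + δ) ∩ Σ_{V_N} is at least τ δ. -/
open MeasureTheory

/-- `y` is a solution of `-y'' + V y = z y` on `ℝ`, with derivative `yd`:
`y` is continuously differentiable and `yd x = yd 0 + ∫₀ˣ (V t - z) y t dt`. -/
def IsSolution (V : ℝ → ℝ) (z : ℂ) (y yd : ℝ → ℂ) : Prop :=
  (∀ x : ℝ, HasDerivAt y (yd x) x) ∧ Continuous yd ∧
    ∀ x : ℝ, yd x = yd 0 + ∫ t in (0:ℝ)..x, ((V t : ℂ) - z) * y t

/-- `Δ` is the discriminant of the `T`-periodic potential `V`: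
`Δ z = y_N(z,T) + y_D'(z,T)` where `y_N`, `y_D` are the Neumann and Dirichlet solutions. -/
def IsDiscriminant (T : ℝ) (V : ℝ → ℝ) (Δ : ℂ → ℂ) : Prop :=
  ∀ z : ℂ, ∃ yN yNd yD yDd : ℝ → ℂ,
    IsSolution V z yN yNd ∧ IsSolution V z yD yDd ∧
    yN 0 = 1 ∧ yNd 0 = 0 ∧ yD 0 = 0 ∧ yDd 0 = 1 ∧
    Δ z = yN T + yDd T

/-- The Besicovitch norm of a `T`-periodic potential: `((1/T) ∫₀ᵀ |W|²)^{1/2}`. -/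
noncomputable def besNorm (T : ℝ) (W : ℝ → ℝ) : ℝ :=
  Real.sqrt ((1 / T) * ∫ t in (0:ℝ)..T, (W t) ^ 2)

/-- The spectrum of the periodic Schrödinger operator, `Σ_V = {E ∈ ℝ : |Δ(E)| ≤ 2}`. -/
def specSet (Δ : ℂ → ℂ) : Set ℝ := {E : ℝ | ‖Δ (E : ℂ)‖ ≤ 2}

section
/-- `f` is a primitive of the integrable function `f'` on `[a,b]`. -/
def Prim (a b : ℝ) (f f' : ℝ → ℝ) : Prop :=
  IntervalIntegrable f' volume a b ∧ ∀ x ∈ Set.Icc a b, f x = f a + ∫ t in a..x, f' t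

lemma Prim.ac {a b : ℝ} (_hab : a ≤ b) {f f' : ℝ → ℝ} (h : Prim a b f f') :
    AbsolutelyContinuousOnInterval (fun x => f a + ∫ t in a..x, f' t) a b ∧
    ∀ᵐ x, x ∈ Set.uIcc a b → HasDerivAt (fun x => f a + ∫ t in a..x, f' t) (f' x) x := by
  refine ⟨?_, ?_⟩
  · have h1 : AbsolutelyContinuousOnInterval (fun _ : ℝ => f a) a b :=
      (contDiff_const.contDiffOn).absolutelyContinuousOnInterval
    exact h1.fun_add (h.1.absolutelyContinuousOnInterval_intervalIntegral (by simp))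
  · filter_upwards [h.1.ae_hasDerivAt_integral] with x hx hx2
    exact (hx hx2 a (by simp)).const_add (f a)

lemma Prim.mono {a b c d : ℝ} {f f' : ℝ → ℝ} (h : Prim a b f f') (hac : a ≤ c) (hcd : c ≤ d)
    (hdb : d ≤ b) : Prim c d f f' := by
  have hi : ∀ u v, a ≤ u → u ≤ v → v ≤ b → IntervalIntegrable f' volume u v := by
    intro u v h1 h2 h3
    apply h.1.mono_set
    rw [Set.uIcc_of_le h2, Set.uIcc_of_le (by linarith)]
    exact Set.Icc_subset_Icc h1 h3
  refine ⟨hi c d hac hcd hdb, fun x hx => ?_⟩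
  rw [h.2 x ⟨by linarith [hx.1], by linarith [hx.2]⟩, h.2 c ⟨hac, by linarith⟩, add_assoc,
    intervalIntegral.integral_add_adjacent_intervals (hi a c le_rfl hac (by linarith))
      (hi c x hac hx.1 (by linarith [hx.2]))]

lemma Prim.mul_end {a b : ℝ} (hab : a ≤ b) {f f' g g' : ℝ → ℝ} (hf : Prim a b f f')
    (hg : Prim a b g g') :
    ∫ x in a..b, (f' x * g x + f x * g' x) = f b * g b - f a * g a := by
  obtain ⟨f1, f2⟩ := hf.ac hab
  obtain ⟨g1, g2⟩ := hg.ac hab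
  have := f1.integral_deriv_mul_eq_sub g1
  rw [← hf.2 b ⟨hab, le_rfl⟩, ← hg.2 b ⟨hab, le_rfl⟩] at this
  simp only [intervalIntegral.integral_same, add_zero] at this
  rw [← this]
  apply intervalIntegral.integral_congr_ae
  filter_upwards [f2, g2] with x h1 h2 h3
  have h4 := Set.uIoc_subset_uIcc h3
  have h5 : x ∈ Set.Icc a b := by rwa [Set.uIcc_of_le hab] at h4
  rw [(h1 h4).deriv, (h2 h4).deriv, hf.2 x h5, hg.2 x h5]

lemma Prim.continuousOn {a b : ℝ} (hab : a ≤ b) {f f' : ℝ → ℝ} (hf : Prim a b f f') :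
    ContinuousOn f (Set.uIcc a b) := by
  refine (hf.ac hab).1.continuousOn.congr ?_
  intro x hx
  rw [Set.uIcc_of_le hab] at hx
  exact hf.2 x hx

lemma Prim.mul {a b : ℝ} (hab : a ≤ b) {f f' g g' : ℝ → ℝ} (hf : Prim a b f f')
    (hg : Prim a b g g') :
    Prim a b (fun x => f x * g x) (fun x => f' x * g x + f x * g' x) := by
  refine ⟨(hf.1.mul_continuousOn (hg.continuousOn hab)).add
    (hg.1.continuousOn_mul (hf.continuousOn hab)), fun x hx => ?_⟩
  rw [Prim.mul_end hx.1 (hf.mono le_rfl hx.1 hx.2) (hg.mono le_rfl hx.1 hx.2)]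
  ring

lemma Prim.sub {a b : ℝ} {f f' g g' : ℝ → ℝ} (hf : Prim a b f f')
    (hg : Prim a b g g') :
    Prim a b (fun x => f x - g x) (fun x => f' x - g' x) := by
  refine ⟨hf.1.sub hg.1, fun x hx => ?_⟩
  have hi : ∀ h' : ℝ → ℝ, IntervalIntegrable h' volume a b → IntervalIntegrable h' volume a x := by
    intro h' h1
    apply h1.mono_set
    rw [Set.uIcc_of_le hx.1, Set.uIcc_of_le (by linarith [hx.1, hx.2])]
    exact Set.Icc_subset_Icc le_rfl hx.2
  beta_reduce
  rw [intervalIntegral.integral_sub (hi _ hf.1) (hi _ hg.1), hf.2 x hx, hg.2 x hx]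
  ring

lemma Prim.const_mul {a b : ℝ} {f f' : ℝ → ℝ} (c : ℝ) (hf : Prim a b f f') :
    Prim a b (fun x => c * f x) (fun x => c * f' x) := by
  refine ⟨hf.1.const_mul c, fun x hx => ?_⟩
  beta_reduce
  rw [intervalIntegral.integral_const_mul, hf.2 x hx]
  ring

lemma Prim.add {a b : ℝ} {f f' g g' : ℝ → ℝ} (hf : Prim a b f f')
    (hg : Prim a b g g') :
    Prim a b (fun x => f x + g x) (fun x => f' x + g' x) := by
  have := hf.sub (hg.const_mul (-1))
  simpa using this

lemma Prim.of_deriv {f f' : ℝ → ℝ} (h : ∀ x, HasDerivAt f (f' x) x) (hc : Continuous f')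
    (a b : ℝ) : Prim a b f f' := by
  refine ⟨hc.intervalIntegrable _ _, fun x _ => ?_⟩
  rw [intervalIntegral.integral_eq_sub_of_hasDerivAt (fun t _ => h t) (hc.intervalIntegrable _ _)]
  ring

lemma Prim.congr {a b : ℝ} {f f' g' : ℝ → ℝ} (hf : Prim a b f f') (h : ∀ x, f' x = g' x) :
    Prim a b f g' := by
  rwa [show g' = f' from (funext h).symm]

/-- exponential of an absolutely continuous function -/
lemma ac_exp {a b : ℝ} {f : ℝ → ℝ} (hf : AbsolutelyContinuousOnInterval f a b) :
    AbsolutelyContinuousOnInterval (fun x => Real.exp (f x)) a b := by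
  obtain ⟨C, hC⟩ := hf.exists_bound
  rw [absolutelyContinuousOnInterval_iff] at hf ⊢
  intro ε hε
  obtain ⟨δ, hδ, H⟩ := hf (ε / Real.exp C) (by positivity)
  refine ⟨δ, hδ, fun E hE hE2 => ?_⟩
  have h1 := H E hE hE2
  rw [lt_div_iff₀ (Real.exp_pos C), Finset.sum_mul] at h1
  refine lt_of_le_of_lt (Finset.sum_le_sum ?_) h1
  intro i hi
  have key : ∀ u v : ℝ, u ≤ C → v ≤ C → Real.exp u - Real.exp v ≤ |u - v| * Real.exp C := by
    intro u v hu hv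
    rcases le_total u v with h | h
    · have := Real.exp_le_exp.mpr h
      have : 0 ≤ |u - v| * Real.exp C := by positivity
      linarith
    · rw [abs_of_nonneg (by linarith)]
      have h1 := Real.add_one_le_exp (v - u)
      have h2 : Real.exp v = Real.exp (v - u) * Real.exp u := by rw [← Real.exp_add]; ring_nf
      have h3 := Real.exp_le_exp.mpr hu
      have h4 := Real.exp_pos u
      nlinarith
  have hb := (hE.1 i hi)
  have hu := le_trans (le_abs_self _) (hC _ hb.1)
  have hv := le_trans (le_abs_self _) (hC _ hb.2)
  rw [Real.dist_eq, Real.dist_eq, abs_le']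
  refine ⟨key _ _ hu hv, ?_⟩
  rw [neg_sub, abs_sub_comm]
  exact key _ _ hv hu

lemma prim_exp {a b : ℝ} (hab : a ≤ b) {κ : ℝ → ℝ} (hκ : IntervalIntegrable κ volume a b) :
    Prim a b (fun x => Real.exp (∫ t in a..x, κ t))
      (fun x => κ x * Real.exp (∫ t in a..x, κ t)) := by
  have h1 := hκ.absolutelyContinuousOnInterval_intervalIntegral (c := a) (by simp)
  have h2 := ac_exp h1
  refine ⟨hκ.mul_continuousOn h2.continuousOn, fun x hx => ?_⟩
  have h3 := (h2.mono (c := a) (d := x) (by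
    rw [Set.uIcc_of_le hx.1, Set.uIcc_of_le hab]
    exact Set.Icc_subset_Icc le_rfl hx.2)).integral_deriv_eq_sub
  have h4 : ∫ t in a..x, κ t * Real.exp (∫ s in a..t, κ s) =
      ∫ t in a..x, deriv (fun x => Real.exp (∫ t in a..x, κ t)) t := by
    apply intervalIntegral.integral_congr_ae
    filter_upwards [hκ.ae_hasDerivAt_integral] with y hy h3
    have h4 := Set.uIoc_subset_uIcc h3
    have h5 : y ∈ Set.uIcc a b := by
      rw [Set.uIcc_of_le hx.1] at h4
      rw [Set.uIcc_of_le hab]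
      exact ⟨h4.1, h4.2.trans hx.2⟩
    rw [((hy h5 a (by simp)).exp).deriv]
    ring
  rw [h4, h3]; ring

lemma gronwall_fwd {a b : ℝ} (hab : a ≤ b) {e e' κ : ℝ → ℝ} (he : Prim a b e e')
    (hκ : IntervalIntegrable κ volume a b) (h : ∀ t ∈ Set.Icc a b, e' t ≤ κ t * e t) :
    e b ≤ e a * Real.exp (∫ t in a..b, κ t) := by
  have h1 := prim_exp hab hκ.neg
  have h2 := Prim.mul_end hab he h1
  have h3 : ∫ x in a..b, (e' x * Real.exp (∫ t in a..x, (-κ) t) +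
      e x * ((-κ) x * Real.exp (∫ t in a..x, (-κ) t))) ≤ 0 := by
    rw [← neg_nonneg, ← intervalIntegral.integral_neg]
    apply intervalIntegral.integral_nonneg hab
    intro t ht
    have := h t ht
    have h5 := Real.exp_pos (∫ t in a..t, (-κ) t)
    simp only [Pi.neg_apply] at *
    nlinarith
  rw [h2] at h3
  simp only [intervalIntegral.integral_same, Real.exp_zero, mul_one, Pi.neg_apply,
    intervalIntegral.integral_neg] at h3
  rw [Real.exp_neg, ← div_eq_mul_inv, sub_nonpos, div_le_iff₀ (Real.exp_pos _)] at h3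
  exact h3

lemma gronwall_bwd {a b : ℝ} (hab : a ≤ b) {e e' κ : ℝ → ℝ} (he : Prim a b e e')
    (hκ : IntervalIntegrable κ volume a b) (h : ∀ t ∈ Set.Icc a b, -(κ t * e t) ≤ e' t) :
    e a ≤ e b * Real.exp (∫ t in a..b, κ t) := by
  have h1 := prim_exp hab hκ
  have h2 := Prim.mul_end hab he h1
  have h3 : 0 ≤ ∫ x in a..b, (e' x * Real.exp (∫ t in a..x, κ t) +
      e x * (κ x * Real.exp (∫ t in a..x, κ t))) := by
    apply intervalIntegral.integral_nonneg hab
    intro t ht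
    have := h t ht
    have h5 := Real.exp_pos (∫ t in a..t, κ t)
    nlinarith
  rw [h2] at h3
  simp only [intervalIntegral.integral_same, Real.exp_zero, mul_one] at h3
  linarith
end

section
/-- real solutions of `y'' = p y` on `[0,R]` -/
def RS (R : ℝ) (p y yd : ℝ → ℝ) : Prop :=
  (∀ x, HasDerivAt y (yd x) x) ∧ Continuous yd ∧ Prim 0 R yd (fun t => p t * y t)

lemma RS.cont {R : ℝ} {p y yd : ℝ → ℝ} (h : RS R p y yd) : Continuous y :=
  continuous_iff_continuousAt.mpr fun x => (h.1 x).continuousAt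

lemma RS.prim {R : ℝ} {p y yd : ℝ → ℝ} (h : RS R p y yd) : Prim 0 R y yd :=
  Prim.of_deriv h.1 h.2.1 0 R

lemma RS.wronskian {R : ℝ} (hR : 0 ≤ R) {p q f fd g gd : ℝ → ℝ} (hf : RS R p f fd)
    (hg : RS R q g gd) :
    Prim 0 R (fun t => fd t * g t - f t * gd t) (fun t => (p t - q t) * (f t * g t)) := by
  have h := (Prim.mul hR hf.2.2 hg.prim).sub (Prim.mul hR hf.prim hg.2.2)
  exact h.congr (fun x => by ring)

lemma RS.energy_prim {R : ℝ} (hR : 0 ≤ R) {V y yd : ℝ → ℝ} {E : ℝ}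
    (h : RS R (fun t => V t - E) y yd) :
    Prim 0 R (fun t => yd t * yd t + E * (y t * y t)) (fun t => 2 * V t * (y t * yd t)) := by
  have h := (Prim.mul hR h.2.2 h.2.2).add ((Prim.mul hR h.prim h.prim).const_mul E)
  exact h.congr (fun x => by ring)

lemma RS.energy {R I : ℝ} {V y yd : ℝ → ℝ} {E : ℝ} (hE : 1 / 2 ≤ E)
    (h : RS R (fun t => V t - E) y yd) (hV : IntervalIntegrable V volume 0 R)
    (hI : ∫ t in (0:ℝ)..R, |V t| ≤ I) {s t : ℝ} (hs : s ∈ Set.Icc 0 R) (ht : t ∈ Set.Icc 0 R) :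
    yd t * yd t + E * (y t * y t) ≤ (yd s * yd s + E * (y s * y s)) * Real.exp (2 * I) := by
  have hR : 0 ≤ R := hs.1.trans hs.2
  have hp := h.energy_prim hR
  have hκ : IntervalIntegrable (fun t => 2 * |V t|) volume 0 R := hV.abs.const_mul 2
  have hsub : ∀ a b, 0 ≤ a → a ≤ b → b ≤ R → IntervalIntegrable (fun t => 2 * |V t|) volume a b := by
    intro a b h1 h2 h3
    apply hκ.mono_set
    rw [Set.uIcc_of_le h2, Set.uIcc_of_le hR]
    exact Set.Icc_subset_Icc h1 h3
  have hVint : ∀ a b, 0 ≤ a → a ≤ b → b ≤ R →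
      Real.exp (∫ t in a..b, 2 * |V t|) ≤ Real.exp (2 * I) := by
    intro a b h1 h2 h3
    apply Real.exp_le_exp.mpr
    have : ∫ t in a..b, 2 * |V t| ≤ ∫ t in (0:ℝ)..R, 2 * |V t| := by
      apply intervalIntegral.integral_mono_interval h1 h2 h3 _ hκ
      exact Filter.Eventually.of_forall fun t => by simp
    simp only [intervalIntegral.integral_const_mul] at this ⊢
    linarith
  have key : ∀ t, |2 * V t * (y t * yd t)| ≤ 2 * |V t| * (yd t * yd t + E * (y t * y t)) := by
    intro t
    rw [abs_mul, abs_mul, abs_two]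
    apply mul_le_mul_of_nonneg_left _ (by positivity)
    rw [abs_le]
    constructor <;>
    nlinarith [sq_nonneg (yd t - y t), sq_nonneg (yd t + y t), sq_nonneg (yd t), sq_nonneg (y t)]
  have nn : ∀ t, 0 ≤ yd t * yd t + E * (y t * y t) := fun t => by
    nlinarith [sq_nonneg (yd t), sq_nonneg (y t)]
  rcases le_total s t with hst | hst
  · refine (gronwall_fwd hst (hp.mono hs.1 hst ht.2) (hsub _ _ hs.1 hst ht.2)
      (fun r _ => (le_abs_self _).trans (key r))).trans ?_
    exact mul_le_mul_of_nonneg_left (hVint _ _ hs.1 hst ht.2) (nn s)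
  · refine (gronwall_bwd hst (hp.mono ht.1 hst hs.2) (hsub _ _ ht.1 hst hs.2)
      (fun r _ => by have := (abs_le.mp (key r)).1; linarith)).trans ?_
    exact mul_le_mul_of_nonneg_left (hVint _ _ ht.1 hst hs.2) (nn s)

/-- fundamental system at energy `E` -/
structure Fund (R : ℝ) (V : ℝ → ℝ) (E : ℝ) (u ud v vd : ℝ → ℝ) : Prop where
  hu : RS R (fun t => V t - E) u ud
  hv : RS R (fun t => V t - E) v vd
  u0 : u 0 = 1
  ud0 : ud 0 = 0
  v0 : v 0 = 0
  vd0 : vd 0 = 1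

lemma Fund.det {R : ℝ} {V : ℝ → ℝ} {E : ℝ} {u ud v vd : ℝ → ℝ} (h : Fund R V E u ud v vd)
    {t : ℝ} (ht : t ∈ Set.Icc 0 R) : u t * vd t - ud t * v t = 1 := by
  have h1 := (h.hu.wronskian (ht.1.trans ht.2) h.hv).2 t ht
  simp only [sub_self, zero_mul, intervalIntegral.integral_zero, h.u0, h.ud0, h.v0, h.vd0] at h1
  linarith

lemma abs_le_of_sq' {a b : ℝ} (hb : 0 ≤ b) (h : a * a ≤ b * b) : |a| ≤ b :=
  abs_le_of_sq_le_sq (by nlinarith) hb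

lemma Fund.bounds {R I : ℝ} {V : ℝ → ℝ} {E : ℝ} {u ud v vd : ℝ → ℝ} (h : Fund R V E u ud v vd)
    (hE : 1 / 2 ≤ E) (hV : IntervalIntegrable V volume 0 R)
    (hI : ∫ t in (0:ℝ)..R, |V t| ≤ I) {t : ℝ} (ht : t ∈ Set.Icc 0 R) :
    |u t| ≤ Real.exp I ∧ |ud t| ≤ Real.sqrt E * Real.exp I ∧
      Real.sqrt E * |v t| ≤ Real.exp I ∧ |vd t| ≤ Real.exp I := by
  have h0 : (0:ℝ) ∈ Set.Icc 0 R := ⟨le_rfl, ht.1.trans ht.2⟩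
  have hu := h.hu.energy hE hV hI h0 ht
  have hv := h.hv.energy hE hV hI h0 ht
  rw [h.u0, h.ud0] at hu
  rw [h.v0, h.vd0] at hv
  have hx : Real.exp (2 * I) = Real.exp I * Real.exp I := by rw [← Real.exp_add]; ring_nf
  rw [hx] at hu hv
  have hp := Real.exp_pos I
  set B := Real.exp I
  have hs : Real.sqrt E * Real.sqrt E = E := Real.mul_self_sqrt (by linarith)
  have hs0 : 0 ≤ Real.sqrt E := Real.sqrt_nonneg E
  refine ⟨abs_le_of_sq' hp.le ?_, abs_le_of_sq' (by positivity) ?_, ?_, abs_le_of_sq' hp.le ?_⟩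
  · have : E * (u t * u t) ≤ E * (B * B) := by nlinarith [mul_self_nonneg (ud t)]
    exact le_of_mul_le_mul_left this (by linarith)
  · have : Real.sqrt E * B * (Real.sqrt E * B) = E * (B * B) := by
      linear_combination (B * B) * hs
    nlinarith [mul_self_nonneg (u t)]
  · have hav : Real.sqrt E * |v t| = |Real.sqrt E * v t| := by rw [abs_mul, abs_of_nonneg hs0]
    rw [hav]
    apply abs_le_of_sq' hp.le
    have : Real.sqrt E * v t * (Real.sqrt E * v t) = E * (v t * v t) := by
      linear_combination (v t * v t) * hs
    nlinarith [mul_self_nonneg (vd t)]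
  · nlinarith [mul_self_nonneg (v t)]

section compare
variable {R : ℝ} {V₁ V₂ : ℝ → ℝ} {E₁ E₂ : ℝ} {u₁ ud₁ v₁ vd₁ u₂ ud₂ v₂ vd₂ : ℝ → ℝ}

/-- entries of `M₁⁻¹ M₂` -/
lemma Fund.cmp (h₁ : Fund R V₁ E₁ u₁ ud₁ v₁ vd₁) (h₂ : Fund R V₂ E₂ u₂ ud₂ v₂ vd₂)
    {t : ℝ} (ht : t ∈ Set.Icc 0 R) :
    vd₁ t * u₂ t - v₁ t * ud₂ t
      = 1 + ∫ s in (0:ℝ)..t, (V₁ s - E₁ - (V₂ s - E₂)) * (v₁ s * u₂ s) ∧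
    vd₁ t * v₂ t - v₁ t * vd₂ t
      = ∫ s in (0:ℝ)..t, (V₁ s - E₁ - (V₂ s - E₂)) * (v₁ s * v₂ s) ∧
    ud₁ t * u₂ t - u₁ t * ud₂ t
      = ∫ s in (0:ℝ)..t, (V₁ s - E₁ - (V₂ s - E₂)) * (u₁ s * u₂ s) ∧
    ud₁ t * v₂ t - u₁ t * vd₂ t
      = -1 + ∫ s in (0:ℝ)..t, (V₁ s - E₁ - (V₂ s - E₂)) * (u₁ s * v₂ s) := by
  have hR : 0 ≤ R := ht.1.trans ht.2
  have a1 := (h₁.hv.wronskian hR h₂.hu).2 t ht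
  have a2 := (h₁.hv.wronskian hR h₂.hv).2 t ht
  have a3 := (h₁.hu.wronskian hR h₂.hu).2 t ht
  have a4 := (h₁.hu.wronskian hR h₂.hv).2 t ht
  simp only [h₁.u0, h₁.ud0, h₁.v0, h₁.vd0, h₂.u0, h₂.ud0, h₂.v0, h₂.vd0] at a1 a2 a3 a4
  refine ⟨?_, ?_, ?_, ?_⟩ <;> linarith

lemma int_mul_cont {p f : ℝ → ℝ} {R : ℝ} (hp : IntervalIntegrable p volume 0 R)
    (hf : Continuous f) : IntervalIntegrable (fun t => p t * f t) volume 0 R :=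
  hp.mul_continuousOn hf.continuousOn

lemma Fund.trace_diff (h₁ : Fund R V₁ E₁ u₁ ud₁ v₁ vd₁) (h₂ : Fund R V₂ E₂ u₂ ud₂ v₂ vd₂)
    (hV₁ : IntervalIntegrable V₁ volume 0 R) (hV₂ : IntervalIntegrable V₂ volume 0 R)
    (hR : 0 ≤ R) :
    (u₂ R + vd₂ R) - (u₁ R + vd₁ R) = ∫ s in (0:ℝ)..R, (V₁ s - E₁ - (V₂ s - E₂)) *
      (- v₁ R * (u₁ s * u₂ s) + u₁ R * (v₁ s * u₂ s) - vd₁ R * (u₁ s * v₂ s)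
        + ud₁ R * (v₁ s * v₂ s)) := by
  have hRR : R ∈ Set.Icc 0 R := ⟨hR, le_rfl⟩
  obtain ⟨a1, a2, a3, a4⟩ := h₁.cmp h₂ hRR
  have hd := h₁.det hRR
  have hp : IntervalIntegrable (fun s => V₁ s - E₁ - (V₂ s - E₂)) volume 0 R :=
    (hV₁.sub intervalIntegrable_const).sub (hV₂.sub intervalIntegrable_const)
  have i1 : IntervalIntegrable (fun s => (V₁ s - E₁ - (V₂ s - E₂)) * (v₁ s * u₂ s))
      volume 0 R := int_mul_cont hp (h₁.hv.cont.mul h₂.hu.cont)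
  have i2 : IntervalIntegrable (fun s => (V₁ s - E₁ - (V₂ s - E₂)) * (v₁ s * v₂ s))
      volume 0 R := int_mul_cont hp (h₁.hv.cont.mul h₂.hv.cont)
  have i3 : IntervalIntegrable (fun s => (V₁ s - E₁ - (V₂ s - E₂)) * (u₁ s * u₂ s))
      volume 0 R := int_mul_cont hp (h₁.hu.cont.mul h₂.hu.cont)
  have i4 : IntervalIntegrable (fun s => (V₁ s - E₁ - (V₂ s - E₂)) * (u₁ s * v₂ s))
      volume 0 R := int_mul_cont hp (h₁.hu.cont.mul h₂.hv.cont)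
  have e : (fun s => (V₁ s - E₁ - (V₂ s - E₂)) *
      (- v₁ R * (u₁ s * u₂ s) + u₁ R * (v₁ s * u₂ s) - vd₁ R * (u₁ s * v₂ s)
        + ud₁ R * (v₁ s * v₂ s))) = fun s =>
      (- v₁ R) * ((V₁ s - E₁ - (V₂ s - E₂)) * (u₁ s * u₂ s)) +
      u₁ R * ((V₁ s - E₁ - (V₂ s - E₂)) * (v₁ s * u₂ s)) -
      vd₁ R * ((V₁ s - E₁ - (V₂ s - E₂)) * (u₁ s * v₂ s)) +
      ud₁ R * ((V₁ s - E₁ - (V₂ s - E₂)) * (v₁ s * v₂ s)) := by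
    funext s; ring
  rw [e, intervalIntegral.integral_add (((i3.const_mul _).add (i1.const_mul _)).sub
    (i4.const_mul _)) (i2.const_mul _), intervalIntegral.integral_sub ((i3.const_mul _).add
    (i1.const_mul _)) (i4.const_mul _), intervalIntegral.integral_add (i3.const_mul _)
    (i1.const_mul _)]
  simp only [intervalIntegral.integral_const_mul]
  have b1 : ∫ s in (0:ℝ)..R, (V₁ s - E₁ - (V₂ s - E₂)) * (v₁ s * u₂ s) =
    vd₁ R * u₂ R - v₁ R * ud₂ R - 1 := by linarith
  have b4 : ∫ s in (0:ℝ)..R, (V₁ s - E₁ - (V₂ s - E₂)) * (u₁ s * v₂ s) =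
    ud₁ R * v₂ R - u₁ R * vd₂ R + 1 := by linarith
  rw [b1, ← a2, ← a3, b4]
  linear_combination (-(u₂ R) - vd₂ R) * hd

lemma Fund.trace_diff_le (h₁ : Fund R V₁ E₁ u₁ ud₁ v₁ vd₁) (h₂ : Fund R V₂ E₂ u₂ ud₂ v₂ vd₂)
    (hV₁ : IntervalIntegrable V₁ volume 0 R) (hV₂ : IntervalIntegrable V₂ volume 0 R)
    (hR : 0 ≤ R) {I ω : ℝ} (hI₁ : ∫ t in (0:ℝ)..R, |V₁ t| ≤ I) (hI₂ : ∫ t in (0:ℝ)..R, |V₂ t| ≤ I)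
    (hE₁ : 1 / 2 ≤ E₁) (hE₂ : 1 / 2 ≤ E₂) (hω : 0 < ω) (hω₁ : ω ≤ Real.sqrt E₁)
    (hω₂ : ω ≤ Real.sqrt E₂) :
    |(u₂ R + vd₂ R) - (u₁ R + vd₁ R)| ≤
      4 * Real.exp I ^ 3 / ω * ∫ s in (0:ℝ)..R, |V₁ s - E₁ - (V₂ s - E₂)| := by
  rw [h₁.trace_diff h₂ hV₁ hV₂ hR]
  have hp : IntervalIntegrable (fun s => V₁ s - E₁ - (V₂ s - E₂)) volume 0 R :=
    (hV₁.sub intervalIntegrable_const).sub (hV₂.sub intervalIntegrable_const)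
  rw [← intervalIntegral.integral_const_mul]
  rw [← Real.norm_eq_abs]
  refine intervalIntegral.norm_integral_le_of_norm_le hR ?_ (hp.abs.const_mul _)
  refine Filter.Eventually.of_forall fun s hs => ?_
  have hs' : s ∈ Set.Icc 0 R := ⟨hs.1.le, hs.2⟩
  obtain ⟨a1, a2, a3, a4⟩ := h₁.bounds hE₁ hV₁ hI₁ (t := R) ⟨hR, le_rfl⟩
  obtain ⟨b1, b2, b3, b4⟩ := h₁.bounds hE₁ hV₁ hI₁ hs'
  obtain ⟨c1, c2, c3, c4⟩ := h₂.bounds hE₂ hV₂ hI₂ hs'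
  have hp := Real.exp_pos I
  set B := Real.exp I
  have f1 : ω * |v₁ R| ≤ B := (mul_le_mul_of_nonneg_right hω₁ (abs_nonneg _)).trans a3
  have f2 : ω * |v₁ s| ≤ B := (mul_le_mul_of_nonneg_right hω₁ (abs_nonneg _)).trans b3
  have f3 : ω * |v₂ s| ≤ B := (mul_le_mul_of_nonneg_right hω₂ (abs_nonneg _)).trans c3
  have t1 : |- v₁ R * (u₁ s * u₂ s)| * ω ≤ B ^ 3 := by
    rw [abs_mul, abs_mul, abs_neg]
    calc _ = (ω * |v₁ R|) * |u₁ s| * |u₂ s| := by ring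
      _ ≤ B * B * B := by gcongr
      _ = B ^ 3 := by ring
  have t2 : |u₁ R * (v₁ s * u₂ s)| * ω ≤ B ^ 3 := by
    rw [abs_mul, abs_mul]
    calc _ = (ω * |v₁ s|) * |u₁ R| * |u₂ s| := by ring
      _ ≤ B * B * B := by gcongr
      _ = B ^ 3 := by ring
  have t3 : |vd₁ R * (u₁ s * v₂ s)| * ω ≤ B ^ 3 := by
    rw [abs_mul, abs_mul]
    calc _ = (ω * |v₂ s|) * |vd₁ R| * |u₁ s| := by ring
      _ ≤ B * B * B := by gcongr
      _ = B ^ 3 := by ring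
  have t4 : |ud₁ R * (v₁ s * v₂ s)| * ω ≤ B ^ 3 := by
    rw [abs_mul, abs_mul]
    calc _ = |ud₁ R| * |v₁ s| * (ω * |v₂ s|) := by ring
      _ ≤ (Real.sqrt E₁ * B) * |v₁ s| * B := by gcongr
      _ = B * B * (Real.sqrt E₁ * |v₁ s|) := by ring
      _ ≤ B * B * B := by gcongr
      _ = B ^ 3 := by ring
  rw [norm_mul, Real.norm_eq_abs, Real.norm_eq_abs, mul_comm]
  apply mul_le_mul_of_nonneg_right _ (abs_nonneg _)
  rw [le_div_iff₀ hω]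
  have := abs_add_le (- v₁ R * (u₁ s * u₂ s) + u₁ R * (v₁ s * u₂ s) - vd₁ R * (u₁ s * v₂ s))
    (ud₁ R * (v₁ s * v₂ s))
  have h2 := abs_sub (- v₁ R * (u₁ s * u₂ s) + u₁ R * (v₁ s * u₂ s)) (vd₁ R * (u₁ s * v₂ s))
  have h3 := abs_add_le (- v₁ R * (u₁ s * u₂ s)) (u₁ R * (v₁ s * u₂ s))
  nlinarith

/-- closeness of solutions for the same potential -/
lemma Fund.close {V : ℝ → ℝ} (h₁ : Fund R V E₁ u₁ ud₁ v₁ vd₁) (h₂ : Fund R V E₂ u₂ ud₂ v₂ vd₂)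
    (hV : IntervalIntegrable V volume 0 R)
    {I : ℝ} (hI : ∫ t in (0:ℝ)..R, |V t| ≤ I)
    (hE₁ : 1 / 2 ≤ E₁) (hE₂ : 1 / 2 ≤ E₂) {t : ℝ} (ht : t ∈ Set.Icc 0 R) :
    |u₂ t - u₁ t| ≤ 2 * (2 * Real.exp I) ^ 3 * R * |E₂ - E₁| ∧
    |v₂ t - v₁ t| ≤ 2 * (2 * Real.exp I) ^ 3 * R * |E₂ - E₁| := by
  have hw : ∀ E : ℝ, 1 / 2 ≤ E → 1 / 2 ≤ Real.sqrt E := fun E hE => by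
    apply Real.le_sqrt_of_sq_le; linarith
  have hp := Real.exp_pos I
  have bu₁ : ∀ s ∈ Set.Icc 0 R, |u₁ s| ≤ 2 * Real.exp I := fun s hs => by
    have := (h₁.bounds hE₁ hV hI hs).1; linarith
  have bu₂ : ∀ s ∈ Set.Icc 0 R, |u₂ s| ≤ 2 * Real.exp I := fun s hs => by
    have := (h₂.bounds hE₂ hV hI hs).1; linarith
  have bv₁ : ∀ s ∈ Set.Icc 0 R, |v₁ s| ≤ 2 * Real.exp I := fun s hs => by
    have := (h₁.bounds hE₁ hV hI hs).2.2.1; nlinarith [hw _ hE₁, abs_nonneg (v₁ s)]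
  have bv₂ : ∀ s ∈ Set.Icc 0 R, |v₂ s| ≤ 2 * Real.exp I := fun s hs => by
    have := (h₂.bounds hE₂ hV hI hs).2.2.1; nlinarith [hw _ hE₂, abs_nonneg (v₂ s)]
  obtain ⟨a1, a2, a3, a4⟩ := h₁.cmp h₂ ht
  have hd := h₁.det ht
  set B := 2 * Real.exp I with hB
  have hB0 : 0 < B := by positivity
  have key : ∀ f g : ℝ → ℝ, (∀ s ∈ Set.Icc 0 R, |f s| ≤ B) → (∀ s ∈ Set.Icc 0 R, |g s| ≤ B) →
      |∫ s in (0:ℝ)..t, (V s - E₁ - (V s - E₂)) * (f s * g s)| ≤ B ^ 2 * |E₂ - E₁| * R := by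
    intro f g hf hg
    rw [← Real.norm_eq_abs]
    have := intervalIntegral.norm_integral_le_of_norm_le_const (a := 0) (b := t)
      (f := fun s => (V s - E₁ - (V s - E₂)) * (f s * g s)) (C := B ^ 2 * |E₂ - E₁|) (by
        intro s hs
        rw [Set.uIoc_of_le ht.1] at hs
        have hs' : s ∈ Set.Icc 0 R := ⟨hs.1.le, hs.2.trans ht.2⟩
        rw [norm_mul, norm_mul, Real.norm_eq_abs, Real.norm_eq_abs, Real.norm_eq_abs]
        have e : V s - E₁ - (V s - E₂) = E₂ - E₁ := by ring
        rw [e]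
        calc _ ≤ |E₂ - E₁| * (B * B) := by
              gcongr
              · exact hf s hs'
              · exact hg s hs'
          _ = _ := by ring)
    refine this.trans ?_
    rw [sub_zero, abs_of_nonneg ht.1]
    gcongr
    exact ht.2
  have k1 := key _ _ bv₁ bu₂
  have k2 := key _ _ bv₁ bv₂
  have k3 := key _ _ bu₁ bu₂
  have k4 := key _ _ bu₁ bv₂
  set J1 := ∫ s in (0:ℝ)..t, (V s - E₁ - (V s - E₂)) * (v₁ s * u₂ s)
  set J2 := ∫ s in (0:ℝ)..t, (V s - E₁ - (V s - E₂)) * (v₁ s * v₂ s)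
  set J3 := ∫ s in (0:ℝ)..t, (V s - E₁ - (V s - E₂)) * (u₁ s * u₂ s)
  set J4 := ∫ s in (0:ℝ)..t, (V s - E₁ - (V s - E₂)) * (u₁ s * v₂ s)
  have e1 : u₂ t - u₁ t = u₁ t * J1 - v₁ t * J3 := by
    have : J1 = vd₁ t * u₂ t - v₁ t * ud₂ t - 1 := by linarith
    rw [this, ← a3]; linear_combination (-(u₂ t)) * hd
  have e2 : v₂ t - v₁ t = u₁ t * J2 - v₁ t * J4 := by
    have : J4 = ud₁ t * v₂ t - u₁ t * vd₂ t + 1 := by linarith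
    rw [this, ← a2]; linear_combination (-(v₂ t)) * hd
  have fin : ∀ a b, |a| ≤ B ^ 2 * |E₂ - E₁| * R → |b| ≤ B ^ 2 * |E₂ - E₁| * R →
      |u₁ t * a - v₁ t * b| ≤ 2 * B ^ 3 * R * |E₂ - E₁| := by
    intro a b ha hb
    refine (abs_sub _ _).trans ?_
    rw [abs_mul, abs_mul]
    calc _ ≤ B * (B ^ 2 * |E₂ - E₁| * R) + B * (B ^ 2 * |E₂ - E₁| * R) := by
          gcongr
          · exact bu₁ t ht
          · exact bv₁ t ht
      _ = _ := by ring
  rw [e1, e2]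
  exact ⟨fin _ _ k1 k3, fin _ _ k2 k4⟩

end compare
end

section
lemma tendsto_int_family {R C E₁ : ℝ} (hR : 0 ≤ R) {f : ℝ → ℝ} {w : ℝ → ℝ → ℝ} (hf : Continuous f)
    (hE₁ : 1 / 2 < E₁)
    (hw : ∀ E, 1 / 2 ≤ E → Continuous (w E))
    (hC : ∀ E, 1 / 2 ≤ E → ∀ t ∈ Set.Icc 0 R, |w E t - w E₁ t| ≤ C * |E - E₁|) :
    Filter.Tendsto (fun E => ∫ t in (0:ℝ)..R, f t * w E t) (nhds E₁)
      (nhds (∫ t in (0:ℝ)..R, f t * w E₁ t)) := by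
  obtain ⟨M, hM⟩ := (isCompact_Icc (a := (0:ℝ)) (b := R)).exists_bound_of_continuousOn hf.continuousOn
  have hM0 : 0 ≤ M := (norm_nonneg _).trans (hM 0 ⟨le_rfl, hR⟩)
  rw [tendsto_iff_norm_sub_tendsto_zero]
  have hlim : Filter.Tendsto (fun E => M * (C * |E - E₁|) * R) (nhds E₁) (nhds 0) := by
    have : Continuous (fun E : ℝ => M * (C * |E - E₁|) * R) := by fun_prop
    have h := this.tendsto E₁
    simpa using h
  refine squeeze_zero' (Filter.Eventually.of_forall fun _ => norm_nonneg _) ?_ hlim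
  filter_upwards [lt_mem_nhds hE₁] with E hE
  have hE : 1 / 2 ≤ E := le_of_lt hE
  have i1 : IntervalIntegrable (fun t => f t * w E t) volume 0 R :=
    (hf.mul (hw E hE)).intervalIntegrable _ _
  have i2 : IntervalIntegrable (fun t => f t * w E₁ t) volume 0 R :=
    (hf.mul (hw E₁ hE₁.le)).intervalIntegrable _ _
  rw [← intervalIntegral.integral_sub i1 i2]
  have := intervalIntegral.norm_integral_le_of_norm_le_const (a := 0) (b := R)
      (f := fun t => f t * w E t - f t * w E₁ t) (C := M * (C * |E - E₁|)) (by
        intro t ht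
        rw [Set.uIoc_of_le hR] at ht
        have ht' : t ∈ Set.Icc 0 R := ⟨ht.1.le, ht.2⟩
        rw [← mul_sub, norm_mul]
        exact mul_le_mul (hM t ht') (hC E hE t ht') (norm_nonneg _) hM0)
  rwa [sub_zero, abs_of_nonneg hR] at this

/-- `Gram` determinant bound -/
lemma Fund.gram_lower {R I η : ℝ} {V : ℝ → ℝ} {E : ℝ} {u ud v vd : ℝ → ℝ}
    (h : Fund R V E u ud v vd)
    (hE : 1 / 2 ≤ E) (hV : IntervalIntegrable V volume 0 R)
    (hI : ∫ t in (0:ℝ)..R, |V t| ≤ I) (hR : 1 ≤ R) (hη : 0 < η) (hη2 : η ≤ 1 / 2)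
    (hη3 : Real.exp I * η * (I + E * R) ≤ 1 / 2) :
    η ^ 3 / 48 ≤ (∫ t in (0:ℝ)..R, u t * u t) * (∫ t in (0:ℝ)..R, v t * v t)
      - (∫ t in (0:ℝ)..R, u t * v t) ^ 2 := by
  set G11 := ∫ t in (0:ℝ)..R, u t * u t with hG11
  set G12 := ∫ t in (0:ℝ)..R, u t * v t with hG12
  set G22 := ∫ t in (0:ℝ)..R, v t * v t with hG22
  have hB := Real.exp_pos I
  have hx : Real.exp (2 * I) = Real.exp I * Real.exp I := by rw [← Real.exp_add]; ring_nf
  set B := Real.exp I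
  have cu := h.hu.cont
  have cv := h.hv.cont
  have ii : ∀ {f : ℝ → ℝ}, Continuous f → ∀ a b, IntervalIntegrable f volume a b :=
    fun hf a b => hf.intervalIntegrable a b
  have quad : ∀ α β : ℝ, ∫ t in (0:ℝ)..R, (α * v t - β * u t) ^ 2 =
      α ^ 2 * G22 - 2 * (α * β) * G12 + β ^ 2 * G11 := by
    intro α β
    rw [hG11, hG12, hG22]
    rw [← intervalIntegral.integral_const_mul, ← intervalIntegral.integral_const_mul,
      ← intervalIntegral.integral_const_mul, ← intervalIntegral.integral_sub,
      ← intervalIntegral.integral_add]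
    · congr 1; funext t; ring
    all_goals apply ii; fun_prop
  have low : ∀ s ∈ Set.Icc (0:ℝ) (1/2), η ^ 3 / 12 ≤
      u s ^ 2 * G22 - 2 * (u s * v s) * G12 + v s ^ 2 * G11 := by
    intro s hs
    have hsR : s ∈ Set.Icc 0 R := ⟨hs.1, by linarith [hs.2]⟩
    have hS : RS R (fun t => V t - E) (fun t => u s * v t - v s * u t)
        (fun t => u s * vd t - v s * ud t) := by
      refine ⟨fun t => ((h.hv.1 t).const_mul _).sub ((h.hu.1 t).const_mul _), ?_, ?_⟩
      · have := h.hv.2.1; have := h.hu.2.1; fun_prop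
      · exact ((h.hv.2.2.const_mul (u s)).sub (h.hu.2.2.const_mul (v s))).congr
          (fun t => by ring)
    have hd := h.det hsR
    have hSd : ∀ t ∈ Set.Icc 0 R, |u s * vd t - v s * ud t| ≤ B := by
      intro t ht
      have e := hS.energy hE hV hI hsR ht
      have e1 : u s * vd s - v s * ud s = 1 := by linarith
      have e2 : u s * v s - v s * u s = 0 := by ring
      simp only [e1, e2, hx] at e
      apply abs_le_of_sq' hB.le
      nlinarith [mul_self_nonneg (u s * v t - v s * u t)]
    have hSb : ∀ t ∈ Set.Icc s (s + η), |u s * v t - v s * u t| ≤ B * η := by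
      intro t ht
      have htR : t ≤ R := by linarith [ht.2, hs.2]
      have e := (hS.prim.mono hs.1 ht.1 htR).2 t ⟨ht.1, le_rfl⟩
      have e2 : u s * v s - v s * u s = 0 := by ring
      simp only [e2, zero_add] at e
      rw [e, ← Real.norm_eq_abs]
      refine (intervalIntegral.norm_integral_le_of_norm_le_const (C := B) ?_).trans ?_
      · intro r hr
        rw [Set.uIoc_of_le ht.1] at hr
        exact hSd r ⟨by linarith [hs.1, hr.1], by linarith [hr.2]⟩
      · rw [abs_of_nonneg (by linarith [ht.1])]
        gcongr; linarith [ht.2]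
    have hSd2 : ∀ t ∈ Set.Icc s (s + η), 1 / 2 ≤ u s * vd t - v s * ud t := by
      intro t ht
      have htR : t ≤ R := by linarith [ht.2, hs.2]
      have e := (hS.2.2.mono hs.1 ht.1 htR)
      have e0 := e.2 t ⟨ht.1, le_rfl⟩
      have e1 : u s * vd s - v s * ud s = 1 := by linarith
      simp only [e1] at e0
      have hVs : IntervalIntegrable V volume s t := hV.mono_set (by
        rw [Set.uIcc_of_le ht.1, Set.uIcc_of_le (by linarith)]
        exact Set.Icc_subset_Icc hs.1 htR)
      have b : ‖∫ r in s..t, (V r - E) * (u s * v r - v s * u r)‖ ≤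
          ∫ r in s..t, (B * η) * (|V r| + E) := by
        refine intervalIntegral.norm_integral_le_of_norm_le ht.1 ?_
          ((hVs.abs.add intervalIntegrable_const).const_mul _)
        refine Filter.Eventually.of_forall fun r hr => ?_
        rw [norm_mul, mul_comm]
        refine mul_le_mul (hSb r ⟨hr.1.le, hr.2.trans ht.2⟩) ?_ (norm_nonneg _) (by positivity)
        rw [Real.norm_eq_abs]
        have := abs_sub (V r) E
        rwa [abs_of_nonneg (by linarith : 0 ≤ E)] at this
      rw [intervalIntegral.integral_const_mul,
        intervalIntegral.integral_add hVs.abs intervalIntegrable_const,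
        intervalIntegral.integral_const, smul_eq_mul] at b
      have c : ∫ r in s..t, |V r| ≤ ∫ r in (0:ℝ)..R, |V r| :=
        intervalIntegral.integral_mono_interval hs.1 ht.1 htR
          (Filter.Eventually.of_forall fun _ => abs_nonneg _) hV.abs
      have d : B * η * ((∫ r in s..t, |V r|) + (t - s) * E) ≤ 1 / 2 := by
        refine le_trans ?_ hη3
        refine mul_le_mul_of_nonneg_left (add_le_add (c.trans hI) ?_) (by positivity)
        rw [mul_comm]
        exact mul_le_mul_of_nonneg_left (by linarith [hs.1]) (by linarith)
      have := (abs_le.mp (b.trans (by linarith [d]) : _ ≤ (1:ℝ)/2)).1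
      linarith
    have hSl : ∀ t ∈ Set.Icc s (s + η), (t - s) / 2 ≤ u s * v t - v s * u t := by
      intro t ht
      have htR : t ≤ R := by linarith [ht.2, hs.2]
      have e := (hS.prim.mono hs.1 ht.1 htR).2 t ⟨ht.1, le_rfl⟩
      have e2 : u s * v s - v s * u s = 0 := by ring
      simp only [e2, zero_add] at e
      rw [e]
      have : ∫ r in s..t, (1/2:ℝ) ≤ ∫ r in s..t, (u s * vd r - v s * ud r) := by
        apply intervalIntegral.integral_mono_on ht.1 intervalIntegrable_const
        · have := h.hv.2.1; have := h.hu.2.1; apply ii; fun_prop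
        · intro r hr; exact hSd2 r ⟨hr.1, hr.2.trans ht.2⟩
      rw [intervalIntegral.integral_const, smul_eq_mul] at this
      linarith
    rw [← quad]
    calc η ^ 3 / 12 = ∫ t in s..(s+η), ((t - s) / 2) ^ 2 := by
          have : ∀ t : ℝ, HasDerivAt (fun t => (t - s) ^ 3 / 12) (((t - s) / 2) ^ 2) t := by
            intro t
            have h3 := (((hasDerivAt_id' t).sub_const s).pow 3).div_const 12
            have e3 : ((t - s) / 2) ^ 2 = ((3:ℕ):ℝ) * (t - s) ^ (3 - 1) * 1 / 12 := by
              norm_num; ring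
            rw [e3]; exact h3
          rw [intervalIntegral.integral_eq_sub_of_hasDerivAt (fun t _ => this t)]
          · simp
          · apply ii; fun_prop
      _ ≤ ∫ t in s..(s+η), (u s * v t - v s * u t) ^ 2 := by
          apply intervalIntegral.integral_mono_on (by linarith)
          · apply ii; fun_prop
          · apply ii; fun_prop
          · intro t ht
            have := hSl t ht
            have h0 : 0 ≤ (t - s) / 2 := by linarith [ht.1]
            gcongr
      _ ≤ _ := by
          apply intervalIntegral.integral_mono_interval hs.1 (by linarith) (by linarith [hs.2])
          · exact Filter.Eventually.of_forall fun _ => sq_nonneg _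
          · apply ii; fun_prop
  have nonneg : ∀ s, 0 ≤ u s ^ 2 * G22 - 2 * (u s * v s) * G12 + v s ^ 2 * G11 := by
    intro s
    rw [← quad]
    exact intervalIntegral.integral_nonneg (by linarith) fun _ _ => sq_nonneg _
  have tot : ∫ s in (0:ℝ)..R, (u s ^ 2 * G22 - 2 * (u s * v s) * G12 + v s ^ 2 * G11) =
      2 * (G11 * G22 - G12 ^ 2) := by
    have e : (fun s => u s ^ 2 * G22 - 2 * (u s * v s) * G12 + v s ^ 2 * G11) =
      fun s => G22 * (u s * u s) - (2 * G12) * (u s * v s) + G11 * (v s * v s) := by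
      funext s; ring
    rw [e, intervalIntegral.integral_add, intervalIntegral.integral_sub,
      intervalIntegral.integral_const_mul, intervalIntegral.integral_const_mul,
      intervalIntegral.integral_const_mul]
    · rw [← hG11, ← hG12, ← hG22]; ring
    all_goals apply ii; fun_prop
  have fin : ∫ s in (0:ℝ)..(1/2), η ^ 3 / 12 ≤
      ∫ s in (0:ℝ)..(1/2), (u s ^ 2 * G22 - 2 * (u s * v s) * G12 + v s ^ 2 * G11) := by
    apply intervalIntegral.integral_mono_on (by norm_num) intervalIntegrable_const _ low
    apply ii; fun_prop
  have fin2 : ∫ s in (0:ℝ)..(1/2), (u s ^ 2 * G22 - 2 * (u s * v s) * G12 + v s ^ 2 * G11) ≤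
      ∫ s in (0:ℝ)..R, (u s ^ 2 * G22 - 2 * (u s * v s) * G12 + v s ^ 2 * G11) := by
    apply intervalIntegral.integral_mono_interval le_rfl (by norm_num) (by linarith)
    · exact Filter.Eventually.of_forall nonneg
    · apply ii; fun_prop
  rw [intervalIntegral.integral_const, smul_eq_mul] at fin
  linarith
end

section
/-- abstract properties of the discriminant used in the argument -/
structure DReg (D D' : ℝ → ℝ) (a b L g : ℝ) : Prop where
  der : ∀ E ∈ Set.Ioo a b, HasDerivAt D (D' E) E
  lip : ∀ E₁ ∈ Set.Ioo a b, ∀ E₂ ∈ Set.Ioo a b, |D E₂ - D E₁| ≤ L * |E₂ - E₁|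
  slope : ∀ E ∈ Set.Ioo a b, |D E| < 2 → g * (4 - D E ^ 2) ≤ D' E ^ 2
  iso : ∀ E ∈ Set.Ioo a b, |D E| = 2 → ∀ᶠ E' in nhdsWithin E {E}ᶜ, |D E'| ≠ 2
  near : ∀ E ∈ Set.Ioo a b, |D E| = 2 → ∃ᶠ E' in nhds E, |D E'| < 2

lemma quad_ineq {G11 G12 G22 α β γ : ℝ} (h1 : 0 < G11) (hdet : 0 < G11 * G22 - G12 ^ 2) :
    4 * (α * γ - β ^ 2) * (G11 * G22 - G12 ^ 2) ≤ (α * G11 + 2 * β * G12 + γ * G22) ^ 2 := by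
  have key : G11 ^ 2 * ((α * G11 + 2 * β * G12 + γ * G22) ^ 2 -
      4 * (α * γ - β ^ 2) * (G11 * G22 - G12 ^ 2)) =
      (α * G11 ^ 2 + 2 * β * G12 * G11 + γ * G12 ^ 2 - γ * (G11 * G22 - G12 ^ 2)) ^ 2 +
      4 * (β * G11 + γ * G12) ^ 2 * (G11 * G22 - G12 ^ 2) := by ring
  have : 0 ≤ G11 ^ 2 * ((α * G11 + 2 * β * G12 + γ * G22) ^ 2 -
      4 * (α * γ - β ^ 2) * (G11 * G22 - G12 ^ 2)) := by rw [key]; positivity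
  have := nonneg_of_mul_nonneg_right this (by positivity)
  linarith

lemma quad_zero {G11 G12 G22 α β γ : ℝ} (h1 : 0 < G11) (hdet : 0 < G11 * G22 - G12 ^ 2)
    (h0 : α * G11 + 2 * β * G12 + γ * G22 = 0) (hd : α * γ = β ^ 2) : α = 0 ∧ β = 0 ∧ γ = 0 := by
  have key : G11 ^ 2 * ((α * G11 + 2 * β * G12 + γ * G22) ^ 2 -
      4 * (α * γ - β ^ 2) * (G11 * G22 - G12 ^ 2)) =
      (α * G11 ^ 2 + 2 * β * G12 * G11 + γ * G12 ^ 2 - γ * (G11 * G22 - G12 ^ 2)) ^ 2 +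
      4 * (β * G11 + γ * G12) ^ 2 * (G11 * G22 - G12 ^ 2) := by ring
  rw [h0, hd] at key
  have k0 : (0:ℝ) = (α * G11 ^ 2 + 2 * β * G12 * G11 + γ * G12 ^ 2 - γ * (G11 * G22 - G12 ^ 2)) ^ 2 +
      4 * (β * G11 + γ * G12) ^ 2 * (G11 * G22 - G12 ^ 2) := by rw [← key]; ring
  have p1 : (α * G11 ^ 2 + 2 * β * G12 * G11 + γ * G12 ^ 2 - γ * (G11 * G22 - G12 ^ 2)) = 0 := by
    have : 0 ≤ 4 * (β * G11 + γ * G12) ^ 2 * (G11 * G22 - G12 ^ 2) := by positivity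
    have : (α * G11 ^ 2 + 2 * β * G12 * G11 + γ * G12 ^ 2 - γ * (G11 * G22 - G12 ^ 2)) ^ 2 = 0 := by
      nlinarith [sq_nonneg (α * G11 ^ 2 + 2 * β * G12 * G11 + γ * G12 ^ 2 - γ * (G11 * G22 - G12 ^ 2))]
    exact pow_eq_zero_iff (two_ne_zero) |>.mp this
  have p2 : β * G11 + γ * G12 = 0 := by
    rw [p1] at k0
    have : (β * G11 + γ * G12) ^ 2 * (G11 * G22 - G12 ^ 2) = 0 := by linarith
    rcases mul_eq_zero.mp this with h | h
    · exact pow_eq_zero_iff (two_ne_zero) |>.mp h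
    · exact absurd h hdet.ne'
  have p3 : γ ^ 2 * (G11 * G22 - G12 ^ 2) = 0 := by
    linear_combination G11 ^ 2 * hd + (β * G11 + γ * G12) * p2 - γ * p1
  have hγ : γ = 0 := by
    rcases mul_eq_zero.mp p3 with h | h
    · exact pow_eq_zero_iff (two_ne_zero) |>.mp h
    · exact absurd h hdet.ne'
  subst hγ
  have hβ : β = 0 := by
    rcases mul_eq_zero.mp (by linarith : β * G11 = 0) with h | h
    · exact h
    · exact absurd h h1.ne'
  subst hβ
  refine ⟨?_, rfl, rfl⟩
  rcases mul_eq_zero.mp (by linarith : α * G11 = 0) with h | h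
  · exact h
  · exact absurd h h1.ne'

set_option maxHeartbeats 1000000 in
theorem family_DReg {R I x : ℝ} (hR : 1 ≤ R) (hI0 : 0 ≤ I) (hx : 1 ≤ x) {V : ℝ → ℝ}
    (hV : IntervalIntegrable V volume 0 R) (hI : ∫ t in (0:ℝ)..R, |V t| ≤ I)
    {u ud v vd : ℝ → ℝ → ℝ}
    (hF : ∀ E, 1 / 2 ≤ E → Fund R V E (u E) (ud E) (v E) (vd E)) :
    ∃ D', DReg (fun E => u E R + vd E R) D' (x - 1/2) (x + 1/2)
      (8 * Real.exp I ^ 3 * R / Real.sqrt x)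
      ((1 / (2 * Real.exp I * (I + 2 * x * R))) ^ 3 / 48) := by
  have hB : 1 ≤ Real.exp I := Real.one_le_exp hI0
  set B := Real.exp I with hBdef
  have hR0 : 0 ≤ R := by linarith
  have hRR : R ∈ Set.Icc 0 R := ⟨hR0, le_rfl⟩
  set η := 1 / (2 * B * (I + 2 * x * R)) with hη
  have hxR : 1 ≤ x * R := by nlinarith
  have hden : 4 ≤ 2 * B * (I + 2 * x * R) := by nlinarith
  have hη0 : 0 < η := by rw [hη]; apply one_div_pos.mpr; linarith
  have hη2 : η ≤ 1 / 2 := by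
    rw [hη]; exact one_div_le_one_div_of_le (by norm_num) (by linarith)
  have gram : ∀ E ∈ Set.Ioo (x - 1/2) (x + 1/2), η ^ 3 / 48 ≤
      (∫ t in (0:ℝ)..R, u E t * u E t) * (∫ t in (0:ℝ)..R, v E t * v E t)
      - (∫ t in (0:ℝ)..R, u E t * v E t) ^ 2 := by
    intro E hE
    have hE' : 1 / 2 ≤ E := by linarith [hE.1]
    refine (hF E hE').gram_lower hE' hV hI hR hη0 hη2 ?_
    have h1 : E * R ≤ 2 * x * R := by
      apply mul_le_mul_of_nonneg_right _ hR0; linarith [hE.2]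
    have h2 : B * η * (I + 2 * x * R) = 1 / 2 := by
      rw [hη]; field_simp
    rw [← h2]
    gcongr
  have G11pos : ∀ E ∈ Set.Ioo (x - 1/2) (x + 1/2), 0 < ∫ t in (0:ℝ)..R, u E t * u E t := by
    intro E hE
    have h0 : 0 ≤ ∫ t in (0:ℝ)..R, u E t * u E t :=
      intervalIntegral.integral_nonneg hR0 fun _ _ => mul_self_nonneg _
    have h1 := gram E hE
    rcases h0.eq_or_lt with h | h
    · rw [← h] at h1
      have : 0 < η ^ 3 / 48 := by positivity
      nlinarith [sq_nonneg (∫ t in (0:ℝ)..R, u E t * v E t)]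
    · exact h
  have gpos : 0 < η ^ 3 / 48 := by positivity
  have cu : ∀ E, 1 / 2 ≤ E → Continuous (u E) := fun E hE => (hF E hE).hu.cont
  have cv : ∀ E, 1 / 2 ≤ E → Continuous (v E) := fun E hE => (hF E hE).hv.cont
  -- limits
  have limu : ∀ E₁ ∈ Set.Ioo (x - 1/2) (x + 1/2), ∀ f : ℝ → ℝ, Continuous f →
      Filter.Tendsto (fun E => ∫ t in (0:ℝ)..R, f t * u E t) (nhds E₁)
      (nhds (∫ t in (0:ℝ)..R, f t * u E₁ t)) := by
    intro E₁ hE₁ f hf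
    have h1 : 1 / 2 < E₁ := by linarith [hE₁.1]
    exact tendsto_int_family hR0 hf h1 cu
      (fun E hE t ht => ((hF E₁ h1.le).close (hF E hE) hV hI h1.le hE ht).1)
  have limv : ∀ E₁ ∈ Set.Ioo (x - 1/2) (x + 1/2), ∀ f : ℝ → ℝ, Continuous f →
      Filter.Tendsto (fun E => ∫ t in (0:ℝ)..R, f t * v E t) (nhds E₁)
      (nhds (∫ t in (0:ℝ)..R, f t * v E₁ t)) := by
    intro E₁ hE₁ f hf
    have h1 : 1 / 2 < E₁ := by linarith [hE₁.1]
    exact tendsto_int_family hR0 hf h1 cv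
      (fun E hE t ht => ((hF E₁ h1.le).close (hF E hE) hV hI h1.le hE ht).2)
  set D' : ℝ → ℝ := fun E => (- v E R) * (∫ t in (0:ℝ)..R, u E t * u E t) +
    2 * ((u E R - vd E R) / 2) * (∫ t in (0:ℝ)..R, u E t * v E t) +
    ud E R * (∫ t in (0:ℝ)..R, v E t * v E t) with hD'
  have der : ∀ E ∈ Set.Ioo (x - 1/2) (x + 1/2), HasDerivAt (fun E => u E R + vd E R) (D' E) E := by
    intro E₁ hE₁
    have h1 : 1 / 2 < E₁ := by linarith [hE₁.1]
    have F₁ := hF E₁ h1.le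
    rw [hasDerivAt_iff_tendsto_slope]
    have L1 := limu E₁ hE₁ _ (cu E₁ h1.le)
    have L2 := limu E₁ hE₁ _ (cv E₁ h1.le)
    have L3 := limv E₁ hE₁ _ (cu E₁ h1.le)
    have L4 := limv E₁ hE₁ _ (cv E₁ h1.le)
    have L := (((L1.const_mul (- v E₁ R)).add (L2.const_mul (u E₁ R))).sub
      (L3.const_mul (vd E₁ R))).add (L4.const_mul (ud E₁ R))
    have eD : - v E₁ R * (∫ t in (0:ℝ)..R, u E₁ t * u E₁ t) +
        u E₁ R * (∫ t in (0:ℝ)..R, v E₁ t * u E₁ t) -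
        vd E₁ R * (∫ t in (0:ℝ)..R, u E₁ t * v E₁ t) +
        ud E₁ R * (∫ t in (0:ℝ)..R, v E₁ t * v E₁ t) = D' E₁ := by
      rw [hD']
      have : ∫ t in (0:ℝ)..R, v E₁ t * u E₁ t = ∫ t in (0:ℝ)..R, u E₁ t * v E₁ t := by
        congr 1; funext t; ring
      rw [this]; ring
    rw [eD] at L
    refine Filter.Tendsto.congr' ?_ (L.mono_left nhdsWithin_le_nhds)
    have hev : ∀ᶠ E in nhdsWithin E₁ {E₁}ᶜ, 1 / 2 < E := nhdsWithin_le_nhds (lt_mem_nhds h1)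
    filter_upwards [hev, self_mem_nhdsWithin] with E hE hne
    have hne' : E - E₁ ≠ 0 := sub_ne_zero.mpr hne
    have td := F₁.trace_diff (hF E hE.le) hV hV hR0
    have e : ∀ s, (V s - E₁ - (V s - E)) = E - E₁ := fun s => by ring
    simp only [e] at td
    rw [intervalIntegral.integral_const_mul] at td
    rw [slope_def_field]
    rw [td, mul_div_cancel_left₀ _ hne']
    have c1 := cu E₁ h1.le
    have c2 := cu E hE.le
    have c3 := cv E₁ h1.le
    have c4 := cv E hE.le
    rw [intervalIntegral.integral_add, intervalIntegral.integral_sub, intervalIntegral.integral_add]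
    · simp only [intervalIntegral.integral_const_mul]
    all_goals apply Continuous.intervalIntegrable; fun_prop
  have slope : ∀ E ∈ Set.Ioo (x - 1/2) (x + 1/2), |u E R + vd E R| < 2 →
      η ^ 3 / 48 * (4 - (u E R + vd E R) ^ 2) ≤ D' E ^ 2 := by
    intro E hE hlt
    have h1 : 1 / 2 < E := by linarith [hE.1]
    have hd := (hF E h1.le).det hRR
    have q := quad_ineq (α := - v E R) (β := (u E R - vd E R) / 2) (γ := ud E R) (G11pos E hE)
      (gpos.trans_le (gram E hE))
    refine le_trans ?_ q
    have e : 4 * (-v E R * ud E R - ((u E R - vd E R) / 2) ^ 2) = 4 - (u E R + vd E R) ^ 2 := by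
      linear_combination 4 * hd
    rw [e, mul_comm]
    apply mul_le_mul_of_nonneg_left (gram E hE)
    have := sq_lt_sq' (abs_lt.mp hlt).1 (abs_lt.mp hlt).2
    linarith
  -- degenerate band edges
  have deg : ∀ E ∈ Set.Ioo (x - 1/2) (x + 1/2), |u E R + vd E R| = 2 → D' E = 0 →
      ∀ᶠ E' in nhdsWithin E {E}ᶜ, |u E' R + vd E' R| < 2 := by
    intro E hE h2 h0
    have h1 : 1 / 2 < E := by linarith [hE.1]
    have F₁ := hF E h1.le
    have hd := F₁.det hRR
    have hsq : (u E R + vd E R) ^ 2 = 4 := by rw [← sq_abs, h2]; norm_num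
    obtain ⟨q1, q2, q3⟩ := quad_zero (α := - v E R) (β := (u E R - vd E R) / 2) (γ := ud E R)
      (G11pos E hE) (gpos.trans_le (gram E hE)) h0 (by linear_combination hd - hsq / 4)
    have hv0 : v E R = 0 := by linarith
    have hda : vd E R = u E R := by linarith
    have ha : u E R * u E R = 1 := by rw [hv0, hda] at hd; linarith
    set a := u E R with hadef
    have L1 := limu E hE _ (cv E h1.le)
    have L2 := limv E hE _ (cv E h1.le)
    have L3 := limu E hE _ (cu E h1.le)
    have L4 := limv E hE _ (cu E h1.le)
    have L := (L2.mul L3).sub (L1.mul L4)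
    have epos : 0 < (∫ t in (0:ℝ)..R, v E t * v E t) * (∫ t in (0:ℝ)..R, u E t * u E t) -
        (∫ t in (0:ℝ)..R, v E t * u E t) * (∫ t in (0:ℝ)..R, u E t * v E t) := by
      have : ∫ t in (0:ℝ)..R, v E t * u E t = ∫ t in (0:ℝ)..R, u E t * v E t := by
        congr 1; funext t; ring
      rw [this]
      have := gpos.trans_le (gram E hE)
      nlinarith
    have ev1 := (L.eventually (lt_mem_nhds epos)).filter_mono
      (nhdsWithin_le_nhds (a := E) (s := {E}ᶜ))
    have hev : ∀ᶠ E' in nhdsWithin E {E}ᶜ, 1 / 2 < E' := nhdsWithin_le_nhds (lt_mem_nhds h1)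
    have ev3 : ∀ᶠ E' in nhdsWithin E {E}ᶜ, -2 < a * (u E' R + vd E' R) := by
      have c : ContinuousAt (fun E' => a * (u E' R + vd E' R)) E :=
        (der E hE).continuousAt.const_mul a
      have : -2 < a * (u E R + vd E R) := by rw [hda, ← hadef]; linarith
      exact (c.eventually (lt_mem_nhds this)).filter_mono nhdsWithin_le_nhds
    filter_upwards [ev1, hev, ev3, self_mem_nhdsWithin] with E' hJ hE' hlow hne
    have hne' : E' - E ≠ 0 := sub_ne_zero.mpr hne
    obtain ⟨c1, c2, c3, c4⟩ := F₁.cmp (hF E' hE'.le) hRR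
    have hd2 := (hF E' hE'.le).det hRR
    have e : ∀ s, (V s - E - (V s - E')) = E' - E := fun s => by ring
    simp only [e, intervalIntegral.integral_const_mul] at c1 c2 c3 c4
    set J1 := ∫ t in (0:ℝ)..R, v E t * u E' t
    set J2 := ∫ t in (0:ℝ)..R, v E t * v E' t
    set J3 := ∫ t in (0:ℝ)..R, u E t * u E' t
    set J4 := ∫ t in (0:ℝ)..R, u E t * v E' t
    rw [hv0, hda] at c1 c2
    rw [q3] at c3 c4
    simp only [zero_mul, sub_zero, zero_sub] at c1 c2 c3 c4
    rw [← hadef] at c3 c4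
    have key : a * (u E' R + vd E' R) = 2 - (E' - E) ^ 2 * (J2 * J3 - J1 * J4) := by
      have k : (a * u E' R) * (a * vd E' R) - (a * ud E' R) * (a * v E' R) = 1 := by
        linear_combination (a * a) * hd2 + ha
      have k2 : a * vd E' R = 1 - (E' - E) * J4 := by linarith
      have k3 : a * ud E' R = - ((E' - E) * J3) := by linarith
      rw [c1, c2, k2, k3] at k
      rw [mul_add, c1, k2]
      linear_combination k
    have hpos : 0 < (E' - E) ^ 2 * (J2 * J3 - J1 * J4) := by positivity
    have hlt : |a * (u E' R + vd E' R)| < 2 := abs_lt.mpr ⟨hlow, by rw [key]; linarith⟩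
    have haa : |a| = 1 := by
      have : |a| * |a| = 1 := by rw [abs_mul_abs_self, ha]
      nlinarith [abs_nonneg a]
    rwa [abs_mul, haa, one_mul] at hlt
  have pm : ∀ r : ℝ, |r| = 2 → r = 2 ∨ r = -2 := fun r hr => by
    rcases abs_choice r with h | h
    · left; linarith
    · right; linarith
  refine ⟨D', ⟨der, ?_, slope, ?_, ?_⟩⟩
  · intro E₁ hE₁ E₂ hE₂
    have h1 : 1 / 2 < E₁ := by linarith [hE₁.1]
    have h2 : 1 / 2 < E₂ := by linarith [hE₂.1]
    have hsx : 0 < Real.sqrt x := Real.sqrt_pos.mpr (by linarith)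
    have hss : Real.sqrt x * Real.sqrt x = x := Real.mul_self_sqrt (by linarith)
    have := (hF E₁ h1.le).trace_diff_le (hF E₂ h2.le) hV hV hR0 hI hI h1.le h2.le
      (ω := Real.sqrt x / 2) (by positivity)
      (by apply Real.le_sqrt_of_sq_le; nlinarith [hE₁.1])
      (by apply Real.le_sqrt_of_sq_le; nlinarith [hE₂.1])
    have e : ∀ s, (V s - E₁ - (V s - E₂)) = E₂ - E₁ := fun s => by ring
    simp only [e, intervalIntegral.integral_const, smul_eq_mul, sub_zero] at this
    refine this.trans (le_of_eq ?_)
    field_simp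
    ring
  · intro E hE h2
    by_cases h0 : D' E = 0
    · filter_upwards [deg E hE h2 h0] with E' h; exact h.ne
    · filter_upwards [(der E hE).eventually_ne h0 (c := 2), (der E hE).eventually_ne h0 (c := -2)]
        with E' h3 h4 h5
      rcases pm _ h5 with h | h
      · exact h3 h
      · exact h4 h
  · intro E hE h2
    by_cases h0 : D' E = 0
    · exact ((deg E hE h2 h0).frequently).filter_mono nhdsWithin_le_nhds
    · intro hcon
      have c := (der E hE).continuousAt
      rcases pm _ h2 with h | h
      · apply h0
        refine IsLocalMin.hasDerivAt_eq_zero ?_ (der E hE)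
        have : (-2:ℝ) < u E R + vd E R := by rw [h]; norm_num
        filter_upwards [hcon, c.eventually (lt_mem_nhds this)] with E' h3 h4
        rw [h]
        by_contra h5
        exact h3 (abs_lt.mpr ⟨h4, not_le.mp h5⟩)
      · apply h0
        refine IsLocalMax.hasDerivAt_eq_zero ?_ (der E hE)
        have : u E R + vd E R < 2 := by rw [h]; norm_num
        filter_upwards [hcon, c.eventually (gt_mem_nhds this)] with E' h3 h4
        rw [h]
        by_contra h5
        exact h3 (abs_lt.mpr ⟨not_le.mp h5, h4⟩)
end

section
lemma evt_lt_left {f : ℝ → ℝ} {f' x : ℝ} (h : HasDerivAt f f' x) (hf : 0 < f') :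
    ∀ᶠ z in nhdsWithin x (Set.Iio x), f z < f x := by
  have h1 := (hasDerivAt_iff_tendsto_slope.mp h).eventually (lt_mem_nhds hf)
  have h2 : ∀ᶠ z in nhdsWithin x (Set.Iio x), 0 < slope f x z :=
    h1.filter_mono (nhdsWithin_mono x (fun z hz => ne_of_lt hz))
  filter_upwards [h2, self_mem_nhdsWithin] with z hz hzx
  rw [slope_def_field, div_pos_iff] at hz
  have : z < x := hzx
  rcases hz with h | h <;> linarith [h.1, h.2]

lemma evt_lt_right {f : ℝ → ℝ} {f' x : ℝ} (h : HasDerivAt f f' x) (hf : f' < 0) :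
    ∀ᶠ z in nhdsWithin x (Set.Ioi x), f z < f x := by
  have h1 := (hasDerivAt_iff_tendsto_slope.mp h).eventually (gt_mem_nhds hf)
  have h2 : ∀ᶠ z in nhdsWithin x (Set.Ioi x), slope f x z < 0 :=
    h1.filter_mono (nhdsWithin_mono x (fun z hz => ne_of_gt hz))
  filter_upwards [h2, self_mem_nhdsWithin] with z hz hzx
  rw [slope_def_field, div_neg_iff] at hz
  have : x < z := hzx
  rcases hz with h | h <;> linarith [h.1, h.2]

section abs
variable {D D' : ℝ → ℝ} {a b L g : ℝ}

lemma DReg.neg (h : DReg D D' a b L g) : DReg (fun E => - D E) (fun E => - D' E) a b L g where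
  der E hE := (h.der E hE).neg
  lip E₁ h₁ E₂ h₂ := by
    have := h.lip E₁ h₁ E₂ h₂
    rwa [show - D E₂ - - D E₁ = -(D E₂ - D E₁) by ring, abs_neg]
  slope E hE := by simpa using h.slope E hE
  iso E hE := by simpa using h.iso E hE
  near E hE := by simpa using h.near E hE

lemma DReg.reflect (h : DReg D D' a b L g) :
    DReg (fun E => D (-E)) (fun E => - D' (-E)) (-b) (-a) L g := by
  have mem : ∀ E ∈ Set.Ioo (-b) (-a), -E ∈ Set.Ioo a b := fun E hE =>
    ⟨by linarith [hE.2], by linarith [hE.1]⟩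
  refine ⟨fun E hE => ?_, fun E₁ h₁ E₂ h₂ => ?_, fun E hE => ?_, fun E hE h2 => ?_, fun E hE h2 => ?_⟩
  · have := (h.der (-E) (mem E hE)).comp E (hasDerivAt_neg E)
    rw [mul_neg_one] at this
    exact this
  · have := h.lip _ (mem _ h₁) _ (mem _ h₂)
    rwa [show -E₂ - -E₁ = -(E₂ - E₁) by ring, abs_neg] at this
  · simpa using h.slope _ (mem E hE)
  · have := h.iso _ (mem E hE) h2
    rw [eventually_nhdsWithin_iff] at this ⊢
    have t : Filter.Tendsto (fun z : ℝ => -z) (nhds E) (nhds (-E)) := continuous_neg.tendsto E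
    filter_upwards [t.eventually this] with z hz hne
    exact hz (by simpa using hne)
  · have := h.near _ (mem E hE) h2
    intro hc
    apply this
    have t : Filter.Tendsto (fun z : ℝ => -z) (nhds (-E)) (nhds E) := by
      simpa using continuous_neg.tendsto (-E)
    filter_upwards [t.eventually hc] with z hz
    simpa using hz

lemma DReg.ne_zero (h : DReg D D' a b L g) (hg : 0 < g) {E : ℝ} (hE : E ∈ Set.Ioo a b)
    (h2 : |D E| < 2) : D' E ≠ 0 := by
  intro h0
  have := h.slope E hE h2
  rw [h0] at this
  have h3 := sq_lt_sq' (abs_lt.mp h2).1 (abs_lt.mp h2).2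
  nlinarith

lemma DReg.left_mono (h : DReg D D' a b L g) (hg : 0 < g) {c d : ℝ} (hac : a ≤ c) (hdb : d ≤ b)
    (hlow : ∀ E ∈ Set.Ioo c d, -2 < D E) {y : ℝ} (hy : y ∈ Set.Ioo c d) (h2 : D y < 2)
    (hpos : 0 < D' y) {E : ℝ} (hE : c < E) (hEy : E ≤ y) : D E < 2 ∧ 0 < D' E := by
  rcases hEy.eq_or_lt with rfl | hlt
  · exact ⟨h2, hpos⟩
  have sub : Set.Icc E y ⊆ Set.Ioo a b := fun z hz =>
    ⟨by linarith [hz.1], by linarith [hz.2, hy.2]⟩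
  have sub2 : Set.Icc E y ⊆ Set.Ioo c d := fun z hz =>
    ⟨by linarith [hz.1], by linarith [hz.2, hy.2]⟩
  have hc : ContinuousOn D (Set.Icc E y) := fun z hz =>
    (h.der z (sub hz)).continuousAt.continuousWithinAt
  obtain ⟨m, hm, hmin⟩ := isCompact_Icc.exists_isMinOn (Set.nonempty_Icc.mpr hEy) hc
  have hmy : D m ≤ D y := hmin (Set.right_mem_Icc.mpr hEy)
  have habs : |D m| < 2 := abs_lt.mpr ⟨hlow m (sub2 hm), by linarith⟩
  have hne := h.ne_zero hg (sub hm) habs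
  have hmlt : m < y := by
    rcases hm.2.eq_or_lt with rfl | h'
    · exfalso
      have e1 := evt_lt_left (h.der m (sub hm)) hpos
      have e2 : ∀ᶠ z in nhdsWithin m (Set.Iio m), E < z := nhdsWithin_le_nhds (lt_mem_nhds hlt)
      obtain ⟨z, hz1, hz2, hz3⟩ := (e1.and (e2.and self_mem_nhdsWithin)).exists
      have : D m ≤ D z := hmin ⟨hz2.le, le_of_lt hz3⟩
      linarith
    · exact h'
  have hmE : m = E := by
    rcases hm.1.eq_or_lt with h' | h'
    · exact h'.symm
    · exfalso
      apply hne
      exact (hmin.isLocalMin (Icc_mem_nhds h' hmlt)).hasDerivAt_eq_zero (h.der m (sub hm))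
  subst hmE
  refine ⟨by linarith, ?_⟩
  by_contra hcon
  have hlt0 : D' m < 0 := lt_of_le_of_ne (not_lt.mp hcon) hne
  have e1 := evt_lt_right (h.der m (sub hm)) hlt0
  have e2 : ∀ᶠ z in nhdsWithin m (Set.Ioi m), z < y := nhdsWithin_le_nhds (gt_mem_nhds hlt)
  obtain ⟨z, hz1, hz2, hz3⟩ := (e1.and (e2.and self_mem_nhdsWithin)).exists
  have : D m ≤ D z := hmin ⟨le_of_lt hz3, hz2.le⟩
  linarith

lemma DReg.right_mono (h : DReg D D' a b L g) (hg : 0 < g) {c d : ℝ} (hac : a ≤ c) (hdb : d ≤ b)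
    (hlow : ∀ E ∈ Set.Ioo c d, -2 < D E) {y : ℝ} (hy : y ∈ Set.Ioo c d) (h2 : D y < 2)
    (hneg : D' y < 0) {E : ℝ} (hE : E < d) (hEy : y ≤ E) : D E < 2 ∧ D' E < 0 := by
  have := h.reflect.left_mono hg (c := -d) (d := -c) (by linarith) (by linarith)
    (fun z hz => hlow (-z) ⟨by linarith [hz.2], by linarith [hz.1]⟩) (y := -y)
    ⟨by linarith [hy.2], by linarith [hy.1]⟩ (by simpa using h2) (by simpa using hneg)
    (E := -E) (by linarith) (by linarith)
  simpa using this

lemma DReg.A1_aux (h : DReg D D' a b L g) (hg : 0 < g) (hL : 0 ≤ L) {y η : ℝ} (hη : 0 < η)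
    (h1 : a ≤ y - η) (h2 : y + η ≤ b) (hy : |D y| ≤ 2) (hLη : L * η ≤ 1) (h0 : 0 ≤ D y) :
    ENNReal.ofReal η ≤ volume ({E | |D E| ≤ 2} ∩ Set.Ioo (y - η) (y + η)) := by
  have hyab : y ∈ Set.Ioo a b := ⟨by linarith, by linarith⟩
  have hlow : ∀ E ∈ Set.Ioo (y - η) (y + η), -2 < D E := by
    intro E hE
    have l := h.lip y hyab E ⟨by linarith [hE.1], by linarith [hE.2]⟩
    have : |E - y| ≤ η := abs_le.mpr ⟨by linarith [hE.1], by linarith [hE.2]⟩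
    have l2 := l.trans ((mul_le_mul_of_nonneg_left this hL).trans hLη)
    linarith [(abs_le.mp l2).1]
  have key : ∀ ρ, 0 < ρ → ρ < η →
      ENNReal.ofReal (η - ρ) ≤ volume ({E | |D E| ≤ 2} ∩ Set.Ioo (y - η) (y + η)) := by
    intro ρ hρ hρη
    have ex : ∃ y', |y' - y| < ρ ∧ |D y'| < 2 := by
      rcases hy.lt_or_eq with h' | h'
      · exact ⟨y, by simpa using hρ, h'⟩
      · have hb : ∀ᶠ z in nhds y, |z - y| < ρ := Metric.ball_mem_nhds y hρ
        obtain ⟨z, hz1, hz2⟩ := ((h.near y hyab h').and_eventually hb).exists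
        exact ⟨z, hz2, hz1⟩
    obtain ⟨y', hy1, hy2⟩ := ex
    rw [abs_lt] at hy1
    have hy'J : y' ∈ Set.Ioo (y - η) (y + η) := ⟨by linarith [hy1.1], by linarith [hy1.2]⟩
    have hne := h.ne_zero hg (E := y') ⟨by linarith [hy'J.1], by linarith [hy'J.2]⟩ hy2
    rcases hne.lt_or_gt with hs | hs
    · have sub : Set.Ioo y' (y + η) ⊆ {E | |D E| ≤ 2} ∩ Set.Ioo (y - η) (y + η) := by
        intro E hE
        have hEJ : E ∈ Set.Ioo (y - η) (y + η) := ⟨by linarith [hE.1, hy'J.1], hE.2⟩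
        have := h.right_mono hg h1 h2 hlow hy'J (abs_lt.mp hy2).2 hs hE.2 hE.1.le
        exact ⟨abs_le.mpr ⟨(hlow E hEJ).le, this.1.le⟩, hEJ⟩
      refine le_trans ?_ (measure_mono sub)
      rw [Real.volume_Ioo]
      exact ENNReal.ofReal_le_ofReal (by linarith [hy1.2])
    · have sub : Set.Ioo (y - η) y' ⊆ {E | |D E| ≤ 2} ∩ Set.Ioo (y - η) (y + η) := by
        intro E hE
        have hEJ : E ∈ Set.Ioo (y - η) (y + η) := ⟨hE.1, by linarith [hE.2, hy'J.2]⟩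
        have := h.left_mono hg h1 h2 hlow hy'J (abs_lt.mp hy2).2 hs hE.1 hE.2.le
        exact ⟨abs_le.mpr ⟨(hlow E hEJ).le, this.1.le⟩, hEJ⟩
      refine le_trans ?_ (measure_mono sub)
      rw [Real.volume_Ioo]
      exact ENNReal.ofReal_le_ofReal (by linarith [hy1.1])
  by_contra hcon
  rw [not_le] at hcon
  set v := volume ({E | |D E| ≤ 2} ∩ Set.Ioo (y - η) (y + η))
  have hfin : v ≠ ⊤ := hcon.ne_top
  have hv : v.toReal < η := by
    rwa [ENNReal.lt_ofReal_iff_toReal_lt hfin] at hcon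
  have hv0 : 0 ≤ v.toReal := ENNReal.toReal_nonneg
  have := key ((η - v.toReal) / 2) (by linarith) (by linarith)
  rw [ENNReal.ofReal_le_iff_le_toReal hfin] at this
  linarith

lemma DReg.A1 (h : DReg D D' a b L g) (hg : 0 < g) (hL : 0 ≤ L) {y η : ℝ} (hη : 0 < η)
    (h1 : a ≤ y - η) (h2 : y + η ≤ b) (hy : |D y| ≤ 2) (hLη : L * η ≤ 1) :
    ENNReal.ofReal η ≤ volume ({E | |D E| ≤ 2} ∩ Set.Ioo (y - η) (y + η)) := by
  rcases le_total 0 (D y) with h0 | h0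
  · exact h.A1_aux hg hL hη h1 h2 hy hLη h0
  · have := h.neg.A1_aux hg hL hη h1 h2 (by simpa using hy) hLη (by simpa using h0)
    simpa using this

/-- descending part near the top edge is short -/
lemma DReg.short_desc (h : DReg D D' a b L g) (hg : 0 < g) {c d ε : ℝ} (hac : a ≤ c) (hdb : d ≤ b)
    (hlow : ∀ E ∈ Set.Ioo c d, 0 ≤ D E) {E₁ E₂ : ℝ} (h1 : E₁ ∈ Set.Ioo c d)
    (h2 : E₂ ∈ Set.Ioo c d) (hle : E₁ ≤ E₂) (hD1 : D E₁ < 2) (hneg : D' E₁ < 0)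
    (hD2 : 2 - ε ≤ D E₂) : E₂ - E₁ ≤ Real.sqrt (2 * ε / g) := by
  have sub : Set.Icc E₁ E₂ ⊆ Set.Ioo c d := fun z hz =>
    ⟨by linarith [hz.1, h1.1], by linarith [hz.2, h2.2]⟩
  have mono : ∀ E ∈ Set.Icc E₁ E₂, D E < 2 ∧ D' E < 0 := fun E hE =>
    h.right_mono hg hac hdb (fun z hz => by linarith [hlow z hz]) h1 hD1 hneg (sub hE).2 hE.1
  have dφ : ∀ E ∈ Set.Icc E₁ E₂, HasDerivAt (fun E => Real.sqrt (2 - D E))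
      ((- D' E) / (2 * Real.sqrt (2 - D E))) E := by
    intro E hE
    have hm := sub hE
    have := ((h.der E ⟨by linarith [hm.1], by linarith [hm.2]⟩).const_sub 2).sqrt
      (by linarith [(mono E hE).1])
    exact this
  have mv := Convex.mul_sub_le_image_sub_of_le_deriv (convex_Icc E₁ E₂)
    (f := fun E => Real.sqrt (2 - D E))
    (fun E hE => (dφ E hE).continuousAt.continuousWithinAt)
    (fun E hE => (dφ E (interior_subset hE)).differentiableAt.differentiableWithinAt)
    (C := Real.sqrt (g / 2)) (by
      intro E hE
      have hE := interior_subset hE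
      rw [(dφ E hE).deriv]
      have hm := sub hE
      obtain ⟨m1, m2⟩ := mono E hE
      have hl := hlow E hm
      have hs := h.slope E ⟨by linarith [hm.1], by linarith [hm.2]⟩
        (abs_lt.mpr ⟨by linarith, m1⟩)
      have hpos : 0 < Real.sqrt (2 - D E) := Real.sqrt_pos.mpr (by linarith)
      rw [le_div_iff₀ (by positivity)]
      have e : Real.sqrt (g / 2) * (2 * Real.sqrt (2 - D E)) = Real.sqrt (2 * g * (2 - D E)) := by
        rw [mul_left_comm, ← Real.sqrt_mul (by positivity)]
        rw [show (2:ℝ) = Real.sqrt 4 by rw [show (4:ℝ) = 2 ^ 2 by norm_num]; simp]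
        rw [← Real.sqrt_mul (by norm_num)]
        rw [show Real.sqrt 4 = 2 by rw [show (4:ℝ) = 2 ^ 2 by norm_num]; simp]
        congr 1; ring
      rw [e, Real.sqrt_le_left (by linarith)]
      nlinarith)
    E₁ (Set.left_mem_Icc.mpr hle) E₂ (Set.right_mem_Icc.mpr hle) hle
  have hp : 0 < Real.sqrt (g / 2) := Real.sqrt_pos.mpr (by positivity)
  have hup : Real.sqrt (2 - D E₂) ≤ Real.sqrt ε := Real.sqrt_le_sqrt (by linarith)
  have h0 : 0 ≤ Real.sqrt (2 - D E₁) := Real.sqrt_nonneg _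
  have : E₂ - E₁ ≤ Real.sqrt ε / Real.sqrt (g / 2) := by
    rw [le_div_iff₀ hp]; linarith
  refine this.trans (le_of_eq ?_)
  rw [← Real.sqrt_div' _ (by positivity)]
  congr 1; field_simp

lemma DReg.short_asc (h : DReg D D' a b L g) (hg : 0 < g) {c d ε : ℝ} (hac : a ≤ c) (hdb : d ≤ b)
    (hlow : ∀ E ∈ Set.Ioo c d, 0 ≤ D E) {E₁ E₂ : ℝ} (h1 : E₁ ∈ Set.Ioo c d)
    (h2 : E₂ ∈ Set.Ioo c d) (hle : E₁ ≤ E₂) (hD2 : D E₂ < 2) (hpos : 0 < D' E₂)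
    (hD1 : 2 - ε ≤ D E₁) : E₂ - E₁ ≤ Real.sqrt (2 * ε / g) := by
  have := h.reflect.short_desc hg (c := -d) (d := -c) (ε := ε) (by linarith) (by linarith)
    (fun z hz => hlow (-z) ⟨by linarith [hz.2], by linarith [hz.1]⟩) (E₁ := -E₂) (E₂ := -E₁)
    ⟨by linarith [h2.2], by linarith [h2.1]⟩ ⟨by linarith [h1.2], by linarith [h1.1]⟩
    (by linarith) (by simpa using hD2) (by simpa using hpos) (by simpa using hD1)
  linarith

lemma DReg.null_edge (h : DReg D D' a b L g) : volume {E | E ∈ Set.Ioo a b ∧ |D E| = 2} = 0 := by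
  apply measure_null_of_locally_null
  intro E hE
  refine ⟨{E}, ?_, by simp⟩
  have := h.iso E hE.1 hE.2
  rw [eventually_nhdsWithin_iff] at this
  rw [mem_nhdsWithin_iff_eventually]
  filter_upwards [this] with z hz hz2
  by_contra hne
  exact hz hne hz2.2

lemma vol_le_of_pairs {S : Set ℝ} {w : ℝ}
    (h : ∀ x ∈ S, ∀ y ∈ S, x ≤ y → y - x ≤ w) : volume S ≤ ENNReal.ofReal w := by
  refine (Real.volume_le_diam S).trans ?_
  apply Metric.ediam_le
  intro x hx y hy
  rw [edist_dist, Real.dist_eq]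
  apply ENNReal.ofReal_le_ofReal
  rcases le_total x y with hxy | hxy
  · rw [abs_sub_comm, abs_of_nonneg (by linarith)]; exact h x hx y hy hxy
  · rw [abs_of_nonneg (by linarith)]; exact h y hy x hx hxy

lemma DReg.A2_pos (h : DReg D D' a b L g) (hg : 0 < g) {c d ε : ℝ} (hac : a ≤ c) (hdb : d ≤ b)
    (hlow : ∀ E ∈ Set.Ioo c d, 0 ≤ D E) :
    volume {E | E ∈ Set.Ioo c d ∧ 2 - ε ≤ |D E| ∧ |D E| ≤ 2} ≤
      ENNReal.ofReal (2 * Real.sqrt (2 * ε / g)) := by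
  have mem : ∀ E ∈ Set.Ioo c d, E ∈ Set.Ioo a b := fun E hE =>
    ⟨by linarith [hE.1], by linarith [hE.2]⟩
  have sub : {E | E ∈ Set.Ioo c d ∧ 2 - ε ≤ |D E| ∧ |D E| ≤ 2} ⊆
      {E | E ∈ Set.Ioo a b ∧ |D E| = 2} ∪
      ({E | E ∈ Set.Ioo c d ∧ 2 - ε ≤ D E ∧ D E < 2 ∧ D' E < 0} ∪
       {E | E ∈ Set.Ioo c d ∧ 2 - ε ≤ D E ∧ D E < 2 ∧ 0 < D' E}) := by
    rintro E ⟨hE, h1, h2⟩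
    rcases h2.eq_or_lt with h3 | h3
    · exact Or.inl ⟨mem E hE, h3⟩
    · right
      have hne := h.ne_zero hg (mem E hE) h3
      rw [abs_of_nonneg (hlow E hE)] at h1 h3
      rcases hne.lt_or_gt with h4 | h4
      · exact Or.inl ⟨hE, h1, h3, h4⟩
      · exact Or.inr ⟨hE, h1, h3, h4⟩
  refine (measure_mono sub).trans ?_
  refine (measure_union_le _ _).trans ?_
  rw [h.null_edge, zero_add]
  refine (measure_union_le _ _).trans ?_
  rw [two_mul, ENNReal.ofReal_add (Real.sqrt_nonneg _) (Real.sqrt_nonneg _)]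
  gcongr
  · apply vol_le_of_pairs
    intro x hx y hy hxy
    exact h.short_desc hg hac hdb hlow hx.1 hy.1 hxy hx.2.2.1 hx.2.2.2 hy.2.1
  · apply vol_le_of_pairs
    intro x hx y hy hxy
    exact h.short_asc hg hac hdb hlow hx.1 hy.1 hxy hy.2.2.1 hy.2.2.2 hx.2.1

lemma DReg.A2_one (h : DReg D D' a b L g) (hg : 0 < g) (hL : 0 ≤ L) {c d ε : ℝ} (hac : a ≤ c)
    (hdb : d ≤ b) (hLd : L * (d - c) ≤ 1) (hε : ε ≤ 1) :
    volume {E | E ∈ Set.Ioo c d ∧ 2 - ε ≤ |D E| ∧ |D E| ≤ 2} ≤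
      ENNReal.ofReal (2 * Real.sqrt (2 * ε / g)) := by
  have mem : ∀ E ∈ Set.Ioo c d, E ∈ Set.Ioo a b := fun E hE =>
    ⟨by linarith [hE.1], by linarith [hE.2]⟩
  rcases Set.eq_empty_or_nonempty {E | E ∈ Set.Ioo c d ∧ 2 - ε ≤ |D E| ∧ |D E| ≤ 2} with he | ⟨y, hy, hy1, hy2⟩
  · rw [he]; simp
  · have l : ∀ E ∈ Set.Ioo c d, |D E - D y| ≤ 1 := by
      intro E hE
      refine (h.lip y (mem y hy) E (mem E hE)).trans (le_trans ?_ hLd)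
      apply mul_le_mul_of_nonneg_left _ hL
      exact abs_le.mpr ⟨by linarith [hE.1, hy.2], by linarith [hE.2, hy.1]⟩
    rcases le_total 0 (D y) with h0 | h0
    · apply h.A2_pos hg hac hdb
      intro E hE
      rw [abs_of_nonneg h0] at hy1
      linarith [(abs_le.mp (l E hE)).1]
    · have := h.neg.A2_pos hg (ε := ε) hac hdb (by
        intro E hE
        rw [abs_of_nonpos h0] at hy1
        linarith [(abs_le.mp (l E hE)).2])
      simpa using this

lemma DReg.A2 (h : DReg D D' a b L g) (hg : 0 < g) (hL : 0 ≤ L) {ε : ℝ} (hε : ε ≤ 1)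
    (M : ℕ) : ∀ {c d : ℝ}, a ≤ c → d ≤ b → L * (d - c) ≤ M →
    volume {E | E ∈ Set.Ioo c d ∧ 2 - ε ≤ |D E| ∧ |D E| ≤ 2} ≤
      ENNReal.ofReal ((M + 1) * (2 * Real.sqrt (2 * ε / g))) := by
  induction M with
  | zero =>
    intro c d hac hdb hM
    have := h.A2_one hg hL (ε := ε) hac hdb (by push_cast at hM; linarith) hε
    simpa using this
  | succ M ih =>
    intro c d hac hdb hM
    rcases le_or_gt d c with hdc | hcd
    · rw [Set.Ioo_eq_empty (not_lt.mpr hdc)]; simp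
    push_cast at hM
    have hM0 : (0:ℝ) ≤ M := Nat.cast_nonneg M
    set m := c + (d - c) * (M / (M + 1)) with hm
    have hfr : (M:ℝ) / (M + 1) ≤ 1 := by rw [div_le_one (by positivity)]; linarith
    have hfr0 : (0:ℝ) ≤ M / (M + 1) := by positivity
    have hcm : c ≤ m := by rw [hm]; nlinarith
    have hmd : m ≤ d := by rw [hm]; nlinarith
    have i1 := ih (c := c) (d := m) hac (by linarith) (by
      rw [hm]
      calc L * (c + (d - c) * (M / (M + 1)) - c) = L * (d - c) * (M / (M + 1)) := by ring
        _ ≤ (M + 1) * (M / (M + 1)) := by gcongr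
        _ = M := by field_simp)
    have i2 := h.A2_one hg hL (ε := ε) (c := m) (d := d) (by linarith) hdb (by
      rw [hm]
      calc L * (d - (c + (d - c) * (M / (M + 1)))) = L * (d - c) * (1 / (M + 1)) := by field_simp; ring
        _ ≤ (M + 1) * (1 / (M + 1)) := by gcongr
        _ = 1 := by field_simp) hε
    have sub : {E | E ∈ Set.Ioo c d ∧ 2 - ε ≤ |D E| ∧ |D E| ≤ 2} ⊆
        ({E | E ∈ Set.Ioo c m ∧ 2 - ε ≤ |D E| ∧ |D E| ≤ 2} ∪
        {E | E ∈ Set.Ioo m d ∧ 2 - ε ≤ |D E| ∧ |D E| ≤ 2}) ∪ {m} := by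
      rintro E ⟨hE, h1⟩
      rcases lt_trichotomy E m with h2 | h2 | h2
      · exact Or.inl (Or.inl ⟨⟨hE.1, h2⟩, h1⟩)
      · exact Or.inr h2
      · exact Or.inl (Or.inr ⟨⟨h2, hE.2⟩, h1⟩)
    refine (measure_mono sub).trans ?_
    refine (measure_union_le _ _).trans ?_
    rw [Real.volume_singleton, add_zero]
    refine (measure_union_le _ _).trans ?_
    refine (add_le_add i1 i2).trans ?_
    rw [← ENNReal.ofReal_add (by positivity) (by positivity)]
    apply ENNReal.ofReal_le_ofReal
    push_cast
    linarith

lemma DReg.A3 (h : DReg D D' a b L g) (hg : 0 < g) (hL : 0 ≤ L) {y η ε : ℝ} (hη : 0 < η)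
    (h1 : a ≤ y - η) (h2 : y + η ≤ b) (hy : |D y| ≤ 2) (hLη : L * η ≤ 1) (hε : ε ≤ 1)
    (hw : 6 * Real.sqrt (2 * ε / g) < η) :
    ∃ y' ∈ Set.Ioo (y - η) (y + η), |D y'| < 2 - ε := by
  by_contra hcon
  push Not at hcon
  have i1 := h.A1 hg hL hη h1 h2 hy hLη
  have i2 := h.A2 hg hL hε 2 h1 h2 (by push_cast; linarith)
  have sub : {E | |D E| ≤ 2} ∩ Set.Ioo (y - η) (y + η) ⊆
    {E | E ∈ Set.Ioo (y - η) (y + η) ∧ 2 - ε ≤ |D E| ∧ |D E| ≤ 2} :=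
    fun E hE => ⟨hE.2, hcon E hE.2, hE.1⟩
  have := i1.trans ((measure_mono sub).trans i2)
  rw [ENNReal.ofReal_le_ofReal_iff (by positivity)] at this
  push_cast at this
  linarith

end abs
end

section
lemma sq_int_of_meas {V : ℝ → ℝ} (hV2 : LocallyIntegrable (fun t => (V t) ^ 2) volume) {R : ℝ}
    (hR : 0 ≤ R) (hm : AEStronglyMeasurable V (volume.restrict (Set.Ioc 0 R))) :
    IntervalIntegrable V volume 0 R := by
  rw [intervalIntegrable_iff_integrableOn_Ioc_of_le hR]
  have h2 : IntegrableOn (fun t => (V t) ^ 2) (Set.Ioc 0 R) volume :=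
    (hV2.integrableOn_isCompact isCompact_Icc).mono_set Set.Ioc_subset_Icc_self
  have : MemLp V 2 (volume.restrict (Set.Ioc 0 R)) := (memLp_two_iff_integrable_sq hm).mpr h2
  exact this.integrable (by norm_num)

lemma IsSolution.cont {V : ℝ → ℝ} {z : ℂ} {y yd : ℝ → ℂ} (h : IsSolution V z y yd) :
    Continuous y := continuous_iff_continuousAt.mpr fun x => (h.1 x).continuousAt

lemma IsSolution.int {V : ℝ → ℝ} {z : ℂ} {y yd : ℝ → ℂ} (h : IsSolution V z y yd) {R : ℝ}
    (hV : IntervalIntegrable V volume 0 R) :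
    IntervalIntegrable (fun t => ((V t : ℂ) - z) * y t) volume 0 R := by
  have h1 : IntervalIntegrable (fun t => (V t : ℂ)) volume 0 R :=
    ⟨hV.1.ofReal, hV.2.ofReal⟩
  exact (h1.sub intervalIntegrable_const).mul_continuousOn h.cont.continuousOn

lemma IsSolution.prims {V : ℝ → ℝ} {z : ℂ} {y yd : ℝ → ℂ} (h : IsSolution V z y yd) {R : ℝ}
    (hV : IntervalIntegrable V volume 0 R) :
    Prim 0 R (fun t => (yd t).re) (fun t => (V t - z.re) * (y t).re + z.im * (y t).im) ∧
    Prim 0 R (fun t => (yd t).im) (fun t => (V t - z.re) * (y t).im - z.im * (y t).re) := by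
  have hi := h.int hV
  have sub : ∀ x ∈ Set.Icc 0 R, IntervalIntegrable (fun t => ((V t : ℂ) - z) * y t) volume 0 x := by
    intro x hx
    apply hi.mono_set
    rw [Set.uIcc_of_le hx.1, Set.uIcc_of_le (hx.1.trans hx.2)]
    exact Set.Icc_subset_Icc le_rfl hx.2
  have e1 : ∀ t, (((V t : ℂ) - z) * y t).re = (V t - z.re) * (y t).re + z.im * (y t).im := by
    intro t; simp [Complex.mul_re]
  have e2 : ∀ t, (((V t : ℂ) - z) * y t).im = (V t - z.re) * (y t).im - z.im * (y t).re := by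
    intro t; simp [Complex.mul_im]; ring
  have i1 : IntervalIntegrable (fun t => (((V t : ℂ) - z) * y t).re) volume 0 R :=
    ⟨hi.1.re, hi.2.re⟩
  have i2 : IntervalIntegrable (fun t => (((V t : ℂ) - z) * y t).im) volume 0 R :=
    ⟨hi.1.im, hi.2.im⟩
  simp only [e1] at i1
  simp only [e2] at i2
  refine ⟨⟨i1, fun x hx => ?_⟩, ⟨i2, fun x hx => ?_⟩⟩
  · simp only [← e1]
    have := Complex.reCLM.intervalIntegral_comp_comm (sub x hx)
    simp only [Complex.reCLM_apply] at this
    rw [this, h.2.2 x, Complex.add_re]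
  · simp only [← e2]
    have := Complex.imCLM.intervalIntegral_comp_comm (sub x hx)
    simp only [Complex.imCLM_apply] at this
    rw [this, h.2.2 x, Complex.add_im]

lemma IsSolution.re_deriv {V : ℝ → ℝ} {z : ℂ} {y yd : ℝ → ℂ} (h : IsSolution V z y yd) (x : ℝ) :
    HasDerivAt (fun t => (y t).re) (yd x).re x := by
  have := (Complex.reCLM.hasFDerivAt.comp_hasDerivAt x (h.1 x))
  exact this

lemma IsSolution.im_deriv {V : ℝ → ℝ} {z : ℂ} {y yd : ℝ → ℂ} (h : IsSolution V z y yd) (x : ℝ) :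
    HasDerivAt (fun t => (y t).im) (yd x).im x := by
  have := (Complex.imCLM.hasFDerivAt.comp_hasDerivAt x (h.1 x))
  exact this

lemma IsSolution.rs {V : ℝ → ℝ} {E : ℝ} {y yd : ℝ → ℂ} (h : IsSolution V (E : ℂ) y yd) {R : ℝ}
    (hV : IntervalIntegrable V volume 0 R) :
    RS R (fun t => V t - E) (fun t => (y t).re) (fun t => (yd t).re) ∧
    RS R (fun t => V t - E) (fun t => (y t).im) (fun t => (yd t).im) := by
  obtain ⟨p1, p2⟩ := h.prims hV
  refine ⟨⟨h.re_deriv, Complex.continuous_re.comp h.2.1, p1.congr (fun x => by simp)⟩,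
    ⟨h.im_deriv, Complex.continuous_im.comp h.2.1, p2.congr (fun x => by simp)⟩⟩

/-- The set of right endpoints up to which `V` is measurable. -/
def MeasTo (V : ℝ → ℝ) (x : ℝ) : Prop :=
  AEStronglyMeasurable V (volume.restrict (Set.Ioc 0 x))

lemma MeasTo.mono {V : ℝ → ℝ} {x y : ℝ} (h : MeasTo V x) (hy : y ≤ x) : MeasTo V y :=
  h.mono_set (Set.Ioc_subset_Ioc_right hy)

/-- past the measurability threshold, a nonvanishing solution has constant derivative -/
lemma IsSolution.const_past {V : ℝ → ℝ} {z : ℂ} {y yd : ℝ → ℂ} (h : IsSolution V z y yd)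
    {a : ℝ} (ha0 : 0 ≤ a) (ha : MeasTo V a) (hna : ∀ x, a < x → ¬ MeasTo V x)
    (hne : ∀ᶠ x in nhdsWithin a (Set.Ioi a), y x ≠ 0) {x : ℝ} (hx : a < x) : yd x = yd 0 := by
  rw [h.2.2 x, intervalIntegral.integral_undef, add_zero]
  intro hVint
  obtain ⟨b, hb, hsub⟩ := mem_nhdsGT_iff_exists_Ioo_subset.mp hne
  have hab : a < b := hb
  obtain ⟨c, hc1, hc2⟩ := exists_between (lt_min hab hx)
  apply hna c hc1
  have hcb : c < b := hc2.trans_le (min_le_left _ _)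
  have hcx : c < x := hc2.trans_le (min_le_right _ _)
  rw [intervalIntegrable_iff_integrableOn_Ioc_of_le (by linarith)] at hVint
  have m1 : AEStronglyMeasurable (fun t => ((V t : ℂ) - z) * y t)
      (volume.restrict (Set.Ioc a c)) :=
    hVint.aestronglyMeasurable.mono_set (Set.Ioc_subset_Ioc ha0 hcx.le)
  have m2 : AEStronglyMeasurable (fun t => (((V t : ℂ) - z) * y t) * (y t)⁻¹ + z)
      (volume.restrict (Set.Ioc a c)) := by
    have : AEStronglyMeasurable (fun t => (y t)⁻¹) (volume.restrict (Set.Ioc a c)) :=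
      (h.cont.measurable.inv).aestronglyMeasurable
    exact (m1.mul this).add aestronglyMeasurable_const
  have m3 : AEStronglyMeasurable (fun t => ((((V t : ℂ) - z) * y t) * (y t)⁻¹ + z).re)
      (volume.restrict (Set.Ioc a c)) := Complex.continuous_re.comp_aestronglyMeasurable m2
  have m4 : AEStronglyMeasurable V (volume.restrict (Set.Ioc a c)) := by
    refine m3.congr ?_
    rw [Filter.EventuallyEq, ae_restrict_iff' measurableSet_Ioc]
    refine Filter.Eventually.of_forall fun t ht => ?_
    have : y t ≠ 0 := hsub ⟨ht.1, by linarith [ht.2]⟩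
    rw [mul_inv_cancel_right₀ this]
    simp
  have e : Set.Ioc 0 c = Set.Ioc 0 a ∪ Set.Ioc a c := (Set.Ioc_union_Ioc_eq_Ioc ha0 hc1.le).symm
  rw [MeasTo, e]
  exact aestronglyMeasurable_union_iff.mpr ⟨ha, m4⟩

lemma IsSolution.const_past_at {V : ℝ → ℝ} {z : ℂ} {y yd : ℝ → ℂ} (h : IsSolution V z y yd)
    {a : ℝ} (ha0 : 0 ≤ a) (ha : MeasTo V a) (hna : ∀ x, a < x → ¬ MeasTo V x)
    (hne : ∀ᶠ x in nhdsWithin a (Set.Ioi a), y x ≠ 0) : yd a = yd 0 := by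
  have t1 : Filter.Tendsto yd (nhdsWithin a (Set.Ioi a)) (nhds (yd a)) :=
    (h.2.1.tendsto a).mono_left nhdsWithin_le_nhds
  have t2 : Filter.Tendsto yd (nhdsWithin a (Set.Ioi a)) (nhds (yd 0)) := by
    refine Filter.Tendsto.congr' ?_ tendsto_const_nhds
    filter_upwards [self_mem_nhdsWithin] with x hx
    exact (h.const_past ha0 ha hna hne hx).symm
  exact tendsto_nhds_unique t1 t2

lemma meas_all {T : ℝ} (hT : 0 < T) {V : ℝ → ℝ} {Δ : ℂ → ℂ} (hD : IsDiscriminant T V Δ)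
    (hV2 : LocallyIntegrable (fun t => (V t) ^ 2) volume) (h0 : (0:ℝ) ∉ specSet Δ) (x : ℝ) :
    MeasTo V x := by
  by_contra hx
  set A := {r : ℝ | 0 ≤ r ∧ MeasTo V r} with hA
  have A0 : (0:ℝ) ∈ A := ⟨le_rfl, by simp [MeasTo]⟩
  have Abdd : BddAbove A := ⟨x, fun r hr => by
    by_contra hlt
    exact hx (hr.2.mono (not_le.mp hlt).le)⟩
  set a := sSup A with ha
  have ha0 : 0 ≤ a := le_csSup Abdd A0
  have hlt : ∀ r, r < a → MeasTo V r := by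
    intro r hr
    obtain ⟨s, hs, hrs⟩ := exists_lt_of_lt_csSup ⟨0, A0⟩ hr
    exact hs.2.mono hrs.le
  have hma : MeasTo V a := by
    have h1 : AEStronglyMeasurable V (volume.restrict (⋃ n : ℕ, Set.Ioc 0 (a - 1 / ((n:ℝ) + 1)))) := by
      rw [aestronglyMeasurable_iUnion_iff]
      intro n
      exact hlt _ (by have : (0:ℝ) < 1 / ((n:ℝ) + 1) := by positivity
                      linarith)
    have h2 : Set.Ioo 0 a ⊆ ⋃ n : ℕ, Set.Ioc 0 (a - 1 / ((n:ℝ) + 1)) := by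
      intro r hr
      obtain ⟨n, hn⟩ := exists_nat_one_div_lt (sub_pos.mpr hr.2)
      exact Set.mem_iUnion.mpr ⟨n, hr.1, by linarith⟩
    have h3 := h1.mono_set h2
    rw [MeasTo, ← restrict_Ioo_eq_restrict_Ioc]
    exact h3
  have hna : ∀ r, a < r → ¬ MeasTo V r := fun r hr hm =>
    absurd (le_csSup Abdd (show r ∈ A from ⟨by linarith, hm⟩)) (not_le.mpr hr)
  rcases ha0.eq_or_lt with h | hpos
  · -- threshold zero
    rw [← h] at hma hna
    obtain ⟨yN, yNd, yD, yDd, s1, s2, n0, nd0, d0, dd0, hΔ⟩ := hD 0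
    have ne1 : ∀ᶠ r in nhdsWithin (0:ℝ) (Set.Ioi 0), yN r ≠ 0 := by
      apply nhdsWithin_le_nhds
      exact s1.cont.continuousAt.eventually_ne (by rw [n0]; exact one_ne_zero)
    have ne2 : ∀ᶠ r in nhdsWithin (0:ℝ) (Set.Ioi 0), yD r ≠ 0 := by
      have := (s2.1 0).eventually_ne (c := 0) (by rw [dd0]; exact one_ne_zero)
      exact this.filter_mono (nhdsWithin_mono 0 (fun z hz => ne_of_gt hz))
    have c1 := fun r (hr : 0 < r) => s1.const_past le_rfl hma hna ne1 hr
    have c2 := fun r (hr : 0 < r) => s2.const_past le_rfl hma hna ne2 hr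
    have e1 : yN T = 1 := by
      have hi := intervalIntegral.integral_eq_sub_of_hasDerivAt (fun t _ => s1.1 t)
        (s1.2.1.intervalIntegrable 0 T)
      have hz : ∫ t in (0:ℝ)..T, yNd t = ∫ t in (0:ℝ)..T, (0:ℂ) := by
        apply intervalIntegral.integral_congr
        intro t ht
        rw [Set.uIcc_of_le hT.le] at ht
        rcases ht.1.eq_or_lt with h | h
        · rw [← h]; exact nd0
        · exact (c1 t h).trans nd0
      rw [hz, intervalIntegral.integral_zero, n0] at hi
      exact (sub_eq_zero.mp hi.symm)
    apply h0
    have : Δ ((0:ℝ):ℂ) = 2 := by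
      rw [Complex.ofReal_zero, hΔ, e1, c2 T hT, dd0]; norm_num
    rw [specSet, Set.mem_setOf_eq, this]
    norm_num
  · obtain ⟨y, yd, -, -, s1, -, n0, nd0, -, -, -⟩ := hD Complex.I
    have hVi := sq_int_of_meas hV2 ha0 hma
    obtain ⟨p1, p2⟩ := s1.prims hVi
    by_cases hya : yd a = 0
    · have q1 := Prim.of_deriv s1.re_deriv (Complex.continuous_re.comp s1.2.1) 0 a
      have q2 := Prim.of_deriv s1.im_deriv (Complex.continuous_im.comp s1.2.1) 0 a
      have W := ((Prim.mul ha0 p2 q1).sub (Prim.mul ha0 p1 q2)).2 a ⟨ha0, le_rfl⟩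
      simp only [hya, nd0, Complex.zero_re, Complex.zero_im, zero_mul, sub_zero, zero_add,
        Complex.I_re, Complex.I_im, one_mul, Function.comp] at W
      have e : ∀ t, (V t * (y t).im - (y t).re) * (y t).re + (yd t).im * (yd t).re -
          ((V t * (y t).re + (y t).im) * (y t).im + (yd t).re * (yd t).im) =
          - ((y t).re ^ 2 + (y t).im ^ 2) := fun t => by ring
      simp only [e, intervalIntegral.integral_neg] at W
      have cr : Continuous fun t => (y t).re := Complex.continuous_re.comp s1.cont
      have ci : Continuous fun t => (y t).im := Complex.continuous_im.comp s1.cont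
      have : 0 < ∫ t in (0:ℝ)..a, ((y t).re ^ 2 + (y t).im ^ 2) := by
        apply intervalIntegral.integral_pos hpos
        · exact Continuous.continuousOn (by fun_prop)
        · intro t _; positivity
        · exact ⟨0, ⟨le_rfl, ha0⟩, by rw [n0]; simp⟩
      linarith
    · have ne : ∀ᶠ r in nhdsWithin a (Set.Ioi a), y r ≠ 0 :=
        ((s1.1 a).eventually_ne (c := 0) hya).filter_mono
          (nhdsWithin_mono a (fun z hz => ne_of_gt hz))
      exact hya ((s1.const_past_at ha0 hma hna ne).trans nd0)

/-- real fundamental systems extracted from the discriminant -/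
lemma exists_fund {T : ℝ} (hT : 0 < T) {V : ℝ → ℝ} {Δ : ℂ → ℂ} (hD : IsDiscriminant T V Δ)
    (hV : ∀ R, 0 ≤ R → IntervalIntegrable V volume 0 R) :
    ∃ u ud v vd : ℝ → ℝ → ℝ,
      (∀ R, 0 ≤ R → ∀ E, 1 / 2 ≤ E → Fund R V E (u E) (ud E) (v E) (vd E)) ∧
      ∀ E : ℝ, 1 / 2 ≤ E → ‖Δ (E : ℂ)‖ = |u E T + vd E T| := by
  choose yN yNd yD yDd hs1 hs2 n0 nd0 d0 dd0 hΔ using fun E : ℝ => hD (E : ℂ)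
  refine ⟨fun E t => (yN E t).re, fun E t => (yNd E t).re, fun E t => (yD E t).re,
    fun E t => (yDd E t).re, ?_, ?_⟩
  · intro R hR E hE
    exact ⟨((hs1 E).rs (hV R hR)).1, ((hs2 E).rs (hV R hR)).1, by simp [n0], by simp [nd0],
      by simp [d0], by simp [dd0]⟩
  · intro E hE
    have r1 := ((hs1 E).rs (hV T hT.le)).2.energy hE (hV T hT.le) le_rfl (s := 0) (t := T)
      ⟨le_rfl, hT.le⟩ ⟨hT.le, le_rfl⟩
    have r2 := ((hs2 E).rs (hV T hT.le)).2.energy hE (hV T hT.le) le_rfl (s := 0) (t := T)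
      ⟨le_rfl, hT.le⟩ ⟨hT.le, le_rfl⟩
    simp only [n0, nd0, d0, dd0, Complex.one_im, Complex.zero_im, mul_zero, add_zero,
      zero_mul] at r1 r2
    have z1 : (yN E T).im = 0 := by
      have : (yN E T).im * (yN E T).im = 0 := by
        nlinarith [mul_self_nonneg (yN E T).im, mul_self_nonneg (yNd E T).im]
      exact mul_self_eq_zero.mp this
    have z2 : (yDd E T).im = 0 := by
      have : (yDd E T).im * (yDd E T).im = 0 := by
        nlinarith [mul_self_nonneg (yD E T).im, mul_self_nonneg (yDd E T).im]
      exact mul_self_eq_zero.mp this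
    have : Δ (E:ℂ) = (((yN E T).re + (yDd E T).re : ℝ) : ℂ) := by
      rw [hΔ E]
      apply Complex.ext <;> simp [z1, z2]
    rw [this, Complex.norm_real, Real.norm_eq_abs]
end

section
/-- any solution is a combination of the fundamental ones -/
lemma Fund.expand {R : ℝ} {V : ℝ → ℝ} {E : ℝ} {u ud v vd y yd : ℝ → ℝ}
    (h : Fund R V E u ud v vd) (hy : RS R (fun t => V t - E) y yd) {t : ℝ}
    (ht : t ∈ Set.Icc 0 R) :
    y t = y 0 * u t + yd 0 * v t ∧ yd t = y 0 * ud t + yd 0 * vd t := by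
  have h1 := (h.hu.wronskian (ht.1.trans ht.2) hy).2 t ht
  have h2 := (h.hv.wronskian (ht.1.trans ht.2) hy).2 t ht
  simp only [sub_self, zero_mul, intervalIntegral.integral_zero, h.u0, h.ud0, h.v0, h.vd0]
    at h1 h2
  have h3 := h.det ht
  constructor
  · linear_combination (-(y t)) * h3 - v t * h1 + u t * h2
  · linear_combination (-(yd t)) * h3 - vd t * h1 + ud t * h2

lemma RS.shift {R T : ℝ} (hR : 0 ≤ R) (hT : 0 ≤ T) {V y yd : ℝ → ℝ} {E : ℝ}
    (hV : Function.Periodic V T)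
    (h : RS (R + T) (fun t => V t - E) y yd) :
    RS R (fun t => V t - E) (fun t => y (t + T)) (fun t => yd (t + T)) := by
  refine ⟨fun x => ?_, h.2.1.comp (continuous_add_const T), ?_⟩
  · simpa using (h.1 (x + T)).comp_add_const x T
  · have h1 := h.2.2.mono hT (by linarith : T ≤ R + T) le_rfl
    have e : (fun t => (V t - E) * y (t + T)) =
        fun t => (fun s => (V s - E) * y s) (t + T) := by
      funext t; simp only [hV t]
    rw [e]
    refine ⟨?_, fun x hx => ?_⟩
    · have := h1.1.comp_add_right T
      simpa using this
    · have := h1.2 (x + T) ⟨by linarith [hx.1], by linarith [hx.2]⟩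
      rw [intervalIntegral.integral_comp_add_right (fun s => (V s - E) * y s) T]
      simpa using this

lemma cheb_iff {s : ℕ → ℝ} {a : ℝ} (h0 : s 0 = 2) (h1 : s 1 = a)
    (h2 : ∀ k, s (k + 2) = a * s (k + 1) - s k) {k : ℕ} (hk : 0 < k) :
    |s k| ≤ 2 ↔ |a| ≤ 2 := by
  constructor
  · intro hs
    by_contra ha
    push Not at ha
    have key : ∀ k, |s k| < |s (k + 1)| ∧ 2 ≤ |s k| := by
      intro k
      induction k with
      | zero => rw [h0, h1]; refine ⟨?_, ?_⟩ <;> norm_num; linarith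
      | succ k ih =>
        refine ⟨?_, by linarith [ih.1, ih.2]⟩
        rw [h2 k]
        have := abs_sub_abs_le_abs_sub (a * s (k + 1)) (s k)
        rw [abs_mul] at this
        nlinarith [abs_nonneg (s (k+1)), ih.1, ih.2]
    obtain ⟨m, rfl⟩ : ∃ m, k = m + 1 := ⟨k - 1, by omega⟩
    linarith [(key m).1, (key m).2]
  · intro ha
    rw [abs_le] at ha
    set θ := Real.arccos (a / 2) with hθ
    have hc : a = 2 * Real.cos θ := by
      rw [hθ, Real.cos_arccos (by linarith) (by linarith)]; ring
    have key : ∀ k : ℕ, s k = 2 * Real.cos (k * θ) ∧ s (k + 1) = 2 * Real.cos ((k + 1) * θ) := by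
      intro k
      induction k with
      | zero => rw [h0, h1, hc]; simp
      | succ k ih =>
        refine ⟨by push_cast; exact ih.2, ?_⟩
        rw [h2 k, ih.1, ih.2, hc]
        have e1 : ((k + 1 : ℕ) + 1 : ℝ) * θ = (k + 1) * θ + θ := by push_cast; ring
        have e2 : (k : ℝ) * θ = (k + 1) * θ - θ := by ring
        rw [e1, e2, Real.cos_add, Real.cos_sub]; ring
    rw [(key k).1, abs_mul, abs_two]
    linarith [Real.abs_cos_le_one (k * θ)]

lemma trace_period {V : ℝ → ℝ} {T E : ℝ} (hT : 0 < T) (hV : Function.Periodic V T)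
    {u ud v vd : ℝ → ℝ} (h : ∀ R, 0 ≤ R → Fund R V E u ud v vd) {k : ℕ} (hk : 0 < k) :
    |u (k * T) + vd (k * T)| ≤ 2 ↔ |u T + vd T| ≤ 2 := by
  have sh : ∀ t, 0 ≤ t → u (t + T) = u T * u t + ud T * v t ∧
      ud (t + T) = u T * ud t + ud T * vd t ∧ v (t + T) = v T * u t + vd T * v t ∧
      vd (t + T) = v T * ud t + vd T * vd t := by
    intro t ht
    have hu := (h t ht).expand ((h (t + T) (by linarith)).hu.shift ht hT.le hV) ⟨ht, le_rfl⟩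
    have hv := (h t ht).expand ((h (t + T) (by linarith)).hv.shift ht hT.le hV) ⟨ht, le_rfl⟩
    simp only [zero_add] at hu hv
    exact ⟨hu.1, hu.2, hv.1, hv.2⟩
  have F := h T hT.le
  have det := F.det (t := T) ⟨hT.le, le_rfl⟩
  refine cheb_iff (s := fun k : ℕ => u (k * T) + vd (k * T)) ?_ ?_ ?_ hk
  · simp [F.u0, F.vd0]; norm_num
  · simp
  · intro k
    have hk0 : 0 ≤ (k:ℝ) * T := by positivity
    obtain ⟨a1, a2, a3, a4⟩ := sh (k * T) hk0
    obtain ⟨b1, b2, b3, b4⟩ := sh (k * T + T) (by linarith)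
    have e1 : ((k + 1 : ℕ) : ℝ) * T = k * T + T := by push_cast; ring
    have e2 : ((k + 2 : ℕ) : ℝ) * T = k * T + T + T := by push_cast; ring
    simp only [e1, e2]
    rw [b1, b4, a1, a2, a3, a4]
    linear_combination (-(u (k * T) + vd (k * T))) * det

lemma l1_le_bes {T : ℝ} (hT : 0 < T) {W : ℝ → ℝ} (h1 : IntervalIntegrable W volume 0 T)
    (h2 : IntervalIntegrable (fun t => W t ^ 2) volume 0 T) :
    ∫ t in (0:ℝ)..T, |W t| ≤ T * besNorm T W := by
  set m := (1 / T) * ∫ t in (0:ℝ)..T, |W t| with hm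
  have e : ∫ t in (0:ℝ)..T, |W t| = T * m := by rw [hm]; field_simp
  have h0 : 0 ≤ ∫ t in (0:ℝ)..T, (|W t| - m) ^ 2 :=
    intervalIntegral.integral_nonneg hT.le fun t _ => sq_nonneg _
  have e2 : (fun t => (|W t| - m) ^ 2) = fun t => (W t ^ 2 - (2 * m) * |W t|) + m ^ 2 := by
    funext t; rw [sub_sq, sq_abs]; ring
  rw [e2, intervalIntegral.integral_add (h2.sub (h1.abs.const_mul _)) intervalIntegrable_const,
    intervalIntegral.integral_sub h2 (h1.abs.const_mul _), intervalIntegral.integral_const_mul,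
    intervalIntegral.integral_const, e, sub_zero, smul_eq_mul] at h0
  rw [e]
  refine mul_le_mul_of_nonneg_left ?_ hT.le
  apply Real.le_sqrt_of_sq_le
  rw [one_div, ← div_eq_inv_mul, le_div_iff₀ hT]
  nlinarith

lemma l1_period {V : ℝ → ℝ} {T c : ℝ} (hT : 0 < T) (hV : Function.Periodic V T)
    (hi : ∀ R, 0 ≤ R → IntervalIntegrable V volume 0 R)
    (hc : ∫ t in (0:ℝ)..T, |V t| ≤ c) (k : ℕ) : ∫ t in (0:ℝ)..(k * T), |V t| ≤ k * c := by
  induction k with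
  | zero => simp
  | succ k ih =>
    have hk : 0 ≤ (k:ℝ) * T := by positivity
    have e1 : ((k + 1 : ℕ) : ℝ) * T = T + k * T := by push_cast; ring
    have i1 := (hi T hT.le).abs
    have i2 := (hi (T + k * T) (by linarith)).abs
    rw [e1, ← intervalIntegral.integral_add_adjacent_intervals i1 (i1.symm.trans i2)]
    have : ∫ t in T..(T + k * T), |V t| = ∫ t in (0:ℝ)..(k * T), |V t| := by
      have := intervalIntegral.integral_comp_add_right (a := 0) (b := k * T) (fun t => |V t|) T
      simp only [hV _] at this
      rw [this]; congr 1 <;> ring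
    rw [this]; push_cast; linarith

lemma period_mul {T : ℕ → ℝ} (hT : ∀ n, ∃ k : ℕ, 0 < k ∧ T (n + 1) = (k : ℝ) * T n) {n m : ℕ}
    (h : n ≤ m) : ∃ k : ℕ, 0 < k ∧ T m = (k : ℝ) * T n := by
  induction m, h using Nat.le_induction with
  | base => exact ⟨1, one_pos, by simp⟩
  | succ m _ ih =>
    obtain ⟨k, hk, e⟩ := ih
    obtain ⟨l, hl, e'⟩ := hT m
    exact ⟨l * k, Nat.mul_pos hl hk, by rw [e', e]; push_cast; ring⟩

lemma l1_chain {V : ℕ → ℝ → ℝ} {b : ℕ → ℝ} {R : ℝ} (hR : 0 ≤ R)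
    (hi : ∀ n, IntervalIntegrable (V n) volume 0 R) {j j' : ℕ} (hj : j ≤ j')
    (hb : ∀ i, j ≤ i → i < j' → ∫ t in (0:ℝ)..R, |V i t - V (i + 1) t| ≤ R * b i) :
    ∫ t in (0:ℝ)..R, |V j t - V j' t| ≤ R * ∑ i ∈ Finset.Ico j j', b i := by
  induction j', hj using Nat.le_induction with
  | base => simp
  | succ m hm ih =>
    rw [Finset.sum_Ico_succ_top hm, mul_add]
    have h1 := ih fun i h1 h2 => hb i h1 (by omega)
    have h2 := hb m hm (by omega)
    calc ∫ t in (0:ℝ)..R, |V j t - V (m + 1) t|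
        ≤ ∫ t in (0:ℝ)..R, (|V j t - V m t| + |V m t - V (m + 1) t|) := by
          apply intervalIntegral.integral_mono_on hR ((hi j).sub (hi (m+1))).abs
            (((hi j).sub (hi m)).abs.add ((hi m).sub (hi (m+1))).abs)
          intro t _
          exact abs_sub_le _ _ _
      _ = _ := intervalIntegral.integral_add ((hi j).sub (hi m)).abs ((hi m).sub (hi (m+1))).abs
      _ ≤ _ := add_le_add h1 h2
end

section
lemma DReg.weaken {D D' : ℝ → ℝ} {a b L g L' g' : ℝ} (h : DReg D D' a b L g) (hL : L ≤ L')
    (hg : g' ≤ g) : DReg D D' a b L' g' := by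
  refine ⟨h.der, fun E₁ h₁ E₂ h₂ => (h.lip E₁ h₁ E₂ h₂).trans
    (mul_le_mul_of_nonneg_right hL (abs_nonneg _)), fun E hE h2 => ?_, h.iso, h.near⟩
  refine le_trans (mul_le_mul_of_nonneg_right hg ?_) (h.slope E hE h2)
  have := abs_lt.mp h2
  nlinarith

lemma seven_le_exp {R : ℝ} (hR : 1 ≤ R) : 7 ≤ Real.exp (2 * R) := by
  have h1 := Real.exp_one_gt_d9
  have h2 : Real.exp 2 = Real.exp 1 * Real.exp 1 := by rw [← Real.exp_add]; norm_num
  have h3 : Real.exp 2 ≤ Real.exp (2 * R) := Real.exp_le_exp.mpr (by linarith)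
  nlinarith

/-- loss in one comparison step -/
lemma one_step {x R δ c γ θ K : ℝ} (hx : 1 ≤ x) (hR : 1 ≤ R) (hc : 4 ≤ c)
    (hδ : Real.exp (-(c * R)) ≤ δ) (hδ8 : δ ≤ 1 / 8) (hθ : δ ≤ θ) (hθ1 : θ ≤ 1)
    (hK : K = 6 * c + γ + 9) (hγ : 0 ≤ γ)
    {D₁ D₁' D₂ D₂' : ℝ → ℝ}
    (r₁ : DReg D₁ D₁' (x - 1/2) (x + 1/2) (Real.exp (c * R) / Real.sqrt x) (Real.exp (-(γ * R))))
    (r₂ : DReg D₂ D₂' (x - 1/2) (x + 1/2) (Real.exp (c * R) / Real.sqrt x) (Real.exp (-(γ * R))))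
    (hd : ∀ E, 1 / 2 ≤ E → |D₂ E - D₁ E| ≤ θ * Real.exp (c * R - K * R)) :
    (∀ y, |y - x| ≤ 1 / 8 → |D₂ y| ≤ 2 →
      ∃ y', |y' - y| ≤ θ * Real.exp (-((c + 2) * R)) ∧ |D₁ y'| ≤ 2) ∧
    volume {E | E ∈ Set.Ioo (x - δ) (x + δ) ∧ |D₁ E| ≤ 2 ∧ ¬ |D₂ E| ≤ 2} ≤
      ENNReal.ofReal (θ * Real.exp (-((c + 2) * R))) := by
  have hδ0 : 0 < δ := lt_of_lt_of_le (Real.exp_pos _) hδ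
  have hθ0 : 0 < θ := by linarith
  have h7 := seven_le_exp hR
  set ε := θ * Real.exp (c * R - K * R) with hε
  set g := Real.exp (-(γ * R)) with hg
  set L := Real.exp (c * R) / Real.sqrt x with hL
  have hg0 : 0 < g := Real.exp_pos _
  have hsx : 1 ≤ Real.sqrt x := Real.one_le_sqrt.mpr hx
  have hL0 : 0 ≤ L := by positivity
  have hLe : L ≤ Real.exp (c * R) := div_le_self (Real.exp_pos _).le hsx
  have hε1 : ε ≤ 1 := by
    rw [hε]
    have : Real.exp (c * R - K * R) ≤ 1 := Real.exp_le_one_iff.mpr (by rw [hK]; nlinarith)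
    nlinarith [Real.exp_pos (c * R - K * R)]
  set σ := θ * Real.exp (-((2 * c + 4) * R)) with hσ
  have hσ0 : 0 < σ := by positivity
  have hsq : Real.sqrt (2 * ε / g) ≤ σ := by
    apply Real.sqrt_le_iff.mpr ⟨hσ0.le, ?_⟩
    have e1 : 2 * ε / g = 2 * θ * Real.exp (c * R - K * R + γ * R) := by
      rw [hε, hg, Real.exp_neg, div_inv_eq_mul, Real.exp_add]; ring
    have e2 : σ ^ 2 = θ * (θ * Real.exp (-((4 * c + 8) * R))) := by
      rw [hσ, mul_pow, ← Real.exp_nat_mul]; push_cast; ring_nf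
    rw [e1, e2]
    have e3 : Real.exp (-(c * R)) ≤ θ := hδ.trans hθ
    have e4 : Real.exp (-(c * R)) * Real.exp (-((4 * c + 8) * R)) ≤
        θ * Real.exp (-((4 * c + 8) * R)) := mul_le_mul_of_nonneg_right e3 (Real.exp_pos _).le
    have e5 : 2 * Real.exp (c * R - K * R + γ * R) ≤
        Real.exp (-(c * R)) * Real.exp (-((4 * c + 8) * R)) := by
      have a1 : (2:ℝ) ≤ Real.exp R := by linarith [Real.add_one_le_exp R]
      calc 2 * Real.exp (c * R - K * R + γ * R) ≤
          Real.exp R * Real.exp (c * R - K * R + γ * R) :=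
            mul_le_mul_of_nonneg_right a1 (Real.exp_pos _).le
        _ = Real.exp (-(c * R)) * Real.exp (-((4 * c + 8) * R)) := by
            rw [← Real.exp_add, ← Real.exp_add, hK]; ring_nf
    nlinarith
  have hcR : 7 ≤ Real.exp (c * R) := h7.trans (Real.exp_le_exp.mpr (by nlinarith))
  have hσρ : σ * Real.exp (c * R) * Real.exp (2 * R) = θ * Real.exp (-((c + 2) * R)) := by
    rw [hσ, mul_assoc, mul_assoc, ← Real.exp_add, ← Real.exp_add]; ring_nf
  have hbig : 7 * (σ * Real.exp (c * R)) ≤ θ * Real.exp (-((c + 2) * R)) := by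
    rw [← hσρ, mul_comm]
    exact mul_le_mul_of_nonneg_left h7 (by positivity)
  have hsmall : θ * Real.exp (-((c + 2) * R)) ≤ 1 / 8 := by
    have : Real.exp (-((c + 2) * R)) * Real.exp ((c + 2) * R) = 1 := by
      rw [← Real.exp_add]; simp
    have h49 : 49 ≤ Real.exp ((c + 2) * R) := by
      have : Real.exp (2 * R) * Real.exp (2 * R) ≤ Real.exp ((c + 2) * R) := by
        rw [← Real.exp_add]; exact Real.exp_le_exp.mpr (by nlinarith)
      nlinarith
    have := Real.exp_pos (-((c + 2) * R))
    nlinarith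
  have h7σ : 7 * σ ≤ θ * Real.exp (-((c + 2) * R)) := by nlinarith
  refine ⟨fun y hy hy2 => ?_, ?_⟩
  · have hy' := abs_le.mp hy
    have hLη : L * (7 * σ) ≤ 1 := by
      have : L * (7 * σ) ≤ Real.exp (c * R) * (7 * σ) :=
        mul_le_mul_of_nonneg_right hLe (by positivity)
      linarith
    obtain ⟨y', h1, h2⟩ := r₂.A3 hg0 hL0 (y := y) (η := 7 * σ) (ε := ε) (by positivity)
      (by linarith) (by linarith) hy2 hLη hε1 (by linarith)
    refine ⟨y', (abs_le.mpr ⟨by linarith [h1.1], by linarith [h1.2]⟩ : |y' - y| ≤ 7 * σ).trans h7σ, ?_⟩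
    have h3 := hd y' (by linarith [h1.1])
    have h4 := abs_sub_abs_le_abs_sub (D₁ y') (D₂ y')
    rw [abs_sub_comm] at h4
    linarith
  · have hM := r₁.A2 hg0 hL0 hε1 ⌈L * (2 * δ)⌉₊ (c := x - δ) (d := x + δ) (by linarith)
      (by linarith) (by
        have := Nat.le_ceil (L * (2 * δ))
        refine le_trans (le_of_eq ?_) this
        ring)
    refine (measure_mono ?_).trans (hM.trans (ENNReal.ofReal_le_ofReal ?_))
    · rintro E ⟨h1, h2, h3⟩
      refine ⟨h1, ?_, h2⟩
      have h3' := hd E (by linarith [h1.1])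
      have h4 := abs_sub_abs_le_abs_sub (D₂ E) (D₁ E)
      linarith
    · have hc1 := Nat.ceil_lt_add_one (show 0 ≤ L * (2 * δ) by positivity)
      have hc2 : L * (2 * δ) ≤ Real.exp (c * R) * (1 / 4) :=
        mul_le_mul hLe (by linarith) (by positivity) (Real.exp_pos _).le
      have hc3 : (⌈L * (2 * δ)⌉₊ : ℝ) + 1 ≤ Real.exp (c * R) := by linarith
      have hs0 := Real.sqrt_nonneg (2 * ε / g)
      calc ((⌈L * (2 * δ)⌉₊ : ℝ) + 1) * (2 * Real.sqrt (2 * ε / g))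
          ≤ Real.exp (c * R) * (2 * σ) := by
            apply mul_le_mul hc3 (by linarith) (by positivity) (Real.exp_pos _).le
        _ ≤ _ := by nlinarith [mul_pos hσ0 (Real.exp_pos (c * R))]
end

section
lemma period_mono {T : ℕ → ℝ} (hT1 : ∀ n, 1 ≤ T n)
    (hT : ∀ n, ∃ k : ℕ, 0 < k ∧ T (n + 1) = (k : ℝ) * T n) {n m : ℕ}
    (h : n ≤ m) : T n ≤ T m := by
  obtain ⟨k, hk, e⟩ := period_mul hT h
  have : (1:ℝ) ≤ k := by exact_mod_cast hk
  rw [e]; nlinarith [hT1 n]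

lemma period_jump {T : ℕ → ℝ} (hT1 : ∀ n, 1 ≤ T n)
    (hT : ∀ n, ∃ k : ℕ, 0 < k ∧ T (n + 1) = (k : ℝ) * T n) {n : ℕ}
    (h : T (n + 1) ≠ T n) : T n + 1 ≤ T (n + 1) := by
  obtain ⟨k, hk, e⟩ := hT n
  have : 2 ≤ k := by
    by_contra hlt
    have : k = 1 := by omega
    subst this
    exact h (by rw [e]; simp)
  have : (2:ℝ) ≤ k := by exact_mod_cast this
  rw [e]; nlinarith [hT1 n]

set_option maxHeartbeats 1600000 in
open Classical in
lemma main_abs {c γ₀ γ θ τ K x δ : ℝ} {T : ℕ → ℝ} {S : ℕ → Set ℝ} {D : ℕ → ℝ → ℝ → ℝ} {N : ℕ}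
    (hT1 : ∀ n, 1 ≤ T n) (hT : ∀ n, ∃ k : ℕ, 0 < k ∧ T (n + 1) = (k : ℝ) * T n)
    (hc : 4 ≤ c) (hγ₀ : 0 ≤ γ₀) (hγ : γ = γ₀ + 6 * c) (hK : K = 6 * c + γ + 9)
    (hτ : τ = 1 - θ) (hθ1 : θ ≤ 1) (hδ0 : 0 < δ) (hδ8 : δ ≤ 1 / 8) (hδθ : δ ≤ θ)
    (hδT : δ * Real.exp (c * T 0) ≤ 1) (hx : 1 ≤ x) (hxS : x ∈ S N)
    (hS : ∀ n m, n ≤ m → ∀ E, 1 / 2 ≤ E → (E ∈ S n ↔ |D n (T m) E| ≤ 2))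
    (hreg : ∀ n m, n ≤ m → ∃ D', DReg (D n (T m)) D' (x - 1/2) (x + 1/2)
      (Real.exp (c * T m) / Real.sqrt x) (Real.exp (-(γ₀ * T m)) / x ^ 3))
    (hdiff : ∀ j j', j < j' → T j' = T (j + 1) → ∀ E, 1 / 2 ≤ E →
      |D j' (T j') E - D j (T j') E| ≤ θ * Real.exp (c * T j' - K * T j')) :
    ENNReal.ofReal (τ * δ) ≤ volume (Set.Ioo (x - δ) (x + δ) ∩ S N) := by
  have hsx : 1 ≤ Real.sqrt x := Real.one_le_sqrt.mpr hx
  have hθ0 : 0 < θ := by linarith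
  set P : ℕ → Prop := fun n => Real.exp (c * T n) / Real.sqrt x * δ ≤ 1 with hP
  have hP0 : P 0 := by
    have : Real.exp (c * T 0) / Real.sqrt x ≤ Real.exp (c * T 0) :=
      div_le_self (Real.exp_pos _).le hsx
    show Real.exp (c * T 0) / Real.sqrt x * δ ≤ 1
    nlinarith
  -- the application of the first estimate
  have useA1 : ∀ n, ∀ y ∈ S n, ∀ η, 0 < η → η ≤ δ → |y - x| ≤ 1 / 8 → P n →
      ENNReal.ofReal η ≤ volume (S n ∩ Set.Ioo (y - η) (y + η)) := by
    intro n y hy η hη hηδ hyx hPn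
    obtain ⟨D', r⟩ := hreg n n le_rfl
    have hyx' := abs_le.mp hyx
    have hp : Real.exp (c * T n) / Real.sqrt x * δ ≤ 1 := hPn
    have := r.A1 (by positivity) (by positivity) hη (by linarith) (by linarith)
      ((hS n n le_rfl y (by linarith)).mp hy)
      (le_trans (mul_le_mul_of_nonneg_left hηδ (by positivity)) hp)
    refine this.trans (measure_mono ?_)
    rintro E ⟨h1, h2⟩
    exact ⟨(hS n n le_rfl E (by linarith [h2.1])).mpr h1, h2⟩
  set n := Nat.findGreatest P N with hn
  have hPn : P n := Nat.findGreatest_spec (Nat.zero_le N) hP0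
  have hnN : n ≤ N := Nat.findGreatest_le N
  rcases hnN.eq_or_lt with hEq | hlt
  · have h1 := useA1 N x hxS δ hδ0 le_rfl (by simp) (hEq ▸ hPn)
    rw [Set.inter_comm] at h1
    refine (ENNReal.ofReal_le_ofReal ?_).trans h1
    rw [hτ]; nlinarith
  have hPn1 : ¬ P (n + 1) := Nat.findGreatest_is_greatest (Nat.lt_succ_self n) hlt
  have hPn1' : 1 < Real.exp (c * T (n + 1)) / Real.sqrt x * δ := not_le.mp hPn1
  have hsxe : Real.sqrt x < Real.exp (c * T (n + 1)) * δ := by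
    rw [div_mul_eq_mul_div, lt_div_iff₀ (by linarith), one_mul] at hPn1'
    exact hPn1'
  have hlow : ∀ R, T (n + 1) ≤ R → Real.exp (-(c * R)) ≤ δ ∧ x ^ 3 ≤ Real.exp (6 * c * R) := by
    intro R hR
    have e1 : Real.exp (c * T (n + 1)) ≤ Real.exp (c * R) := Real.exp_le_exp.mpr (by nlinarith)
    have e2 : Real.exp (-(c * R)) * Real.exp (c * R) = 1 := by rw [← Real.exp_add]; simp
    have e3 : 1 ≤ Real.exp (c * R) * δ := by nlinarith
    have e0 := Real.exp_pos (-(c * R))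
    refine ⟨by nlinarith, ?_⟩
    have e4 : Real.sqrt x ≤ Real.exp (c * R) := by
      have := Real.exp_pos (c * R)
      nlinarith
    have e5 : x ^ 3 = Real.sqrt x ^ 6 := by
      conv_lhs => rw [← Real.sq_sqrt (show 0 ≤ x by linarith)]
      ring
    rw [e5, show 6 * c * R = (6:ℕ) * (c * R) by push_cast; ring, Real.exp_nat_mul]
    exact pow_le_pow_left₀ (by linarith) e4 6
  set ρ : ℕ → ℝ := fun j => if j = N then 0 else 2 * (θ * Real.exp (-((c + 2) * T (j + 1)))) with hρ
  have hρ0 : ∀ j, 0 ≤ ρ j := by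
    intro j; rw [hρ]; dsimp only; split_ifs <;> positivity
  have hexp : ∀ j, Real.exp (-((c + 2) * T j)) ≤ 1 / 49 := by
    intro j
    have h7 := seven_le_exp (hT1 j)
    have : Real.exp (-((c + 2) * T j)) * Real.exp ((c + 2) * T j) = 1 := by
      rw [← Real.exp_add]; simp
    have h49 : 49 ≤ Real.exp ((c + 2) * T j) := by
      have : Real.exp (2 * T j) * Real.exp (2 * T j) ≤ Real.exp ((c + 2) * T j) := by
        rw [← Real.exp_add]; exact Real.exp_le_exp.mpr (by nlinarith [hT1 j])
      nlinarith
    have := Real.exp_pos (-((c + 2) * T j))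
    nlinarith
  have hρ8 : ∀ j, ρ j ≤ 1 / 8 := by
    intro j; rw [hρ]; dsimp only; split_ifs
    · norm_num
    · have := hexp (j + 1)
      have := Real.exp_pos (-((c + 2) * T (j + 1)))
      nlinarith
  have claim : ∀ d j, n ≤ j → j + d = N → (∃ y ∈ S j, |y - x| ≤ ρ j) ∧
      volume ((Set.Ioo (x - δ) (x + δ) ∩ S j) \ S N) ≤ ENNReal.ofReal (ρ j) := by
    intro d
    induction d using Nat.strong_induction_on with
    | _ d ih =>
    intro j hnj hjd
    rcases Nat.eq_zero_or_pos d with h0 | hpos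
    · have : j = N := by omega
      subst this
      refine ⟨⟨x, hxS, by simpa using hρ0 j⟩, ?_⟩
      have : (Set.Ioo (x - δ) (x + δ) ∩ S j) \ S j = ∅ := by
        ext E; simp
      rw [this]; simp
    · have hjN : j < N := by omega
      set j' := Nat.findGreatest (fun i => T i = T (j + 1)) N with hj'
      have hT' : T j' = T (j + 1) :=
        Nat.findGreatest_spec (P := fun i => T i = T (j + 1)) (m := j + 1) hjN rfl
      have hjj' : j + 1 ≤ j' :=
        Nat.le_findGreatest (P := fun i => T i = T (j + 1)) hjN rfl
      have hj'N : j' ≤ N := Nat.findGreatest_le N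
      obtain ⟨⟨y, hy, hyx⟩, hvol⟩ := ih (N - j') (by omega) j' (by omega) (by omega)
      have hR : T (n + 1) ≤ T j' := period_mono hT1 hT (by omega)
      obtain ⟨l1, l2⟩ := hlow _ hR
      have hgg : Real.exp (-(γ * T j')) ≤ Real.exp (-(γ₀ * T j')) / x ^ 3 := by
        rw [le_div_iff₀ (by positivity)]
        calc Real.exp (-(γ * T j')) * x ^ 3 ≤ Real.exp (-(γ * T j')) * Real.exp (6 * c * T j') :=
              mul_le_mul_of_nonneg_left l2 (Real.exp_pos _).le
          _ = _ := by rw [← Real.exp_add, hγ]; ring_nf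
      obtain ⟨D₁', r₁⟩ := hreg j j' (by omega)
      obtain ⟨D₂', r₂⟩ := hreg j' j' le_rfl
      obtain ⟨s1, s2⟩ := one_step hx (hT1 j') hc l1 hδ8 hδθ hθ1 hK (by rw [hγ]; linarith)
        (r₁.weaken le_rfl hgg) (r₂.weaken le_rfl hgg) (hdiff j j' (by omega) hT')
      have hstep : θ * Real.exp (-((c + 2) * T j')) + ρ j' ≤ ρ j := by
        have e1 : ρ j = 2 * (θ * Real.exp (-((c + 2) * T j'))) := by
          rw [hρ]; dsimp only; rw [if_neg (by omega), hT']
        have e2 : ρ j' ≤ θ * Real.exp (-((c + 2) * T j')) := by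
          rw [hρ]; dsimp only
          split_ifs with hif
          · positivity
          · have hne : T (j' + 1) ≠ T j' := by
              rw [hT']
              exact Nat.findGreatest_is_greatest (P := fun i => T i = T (j + 1)) (n := N)
                (Nat.lt_succ_self j') (by omega)
            have hjump := period_jump hT1 hT hne
            have a1 : Real.exp (-((c + 2) * T (j' + 1))) ≤
                Real.exp (-((c + 2) * T j')) * Real.exp (-1) := by
              rw [← Real.exp_add]; exact Real.exp_le_exp.mpr (by nlinarith)
            have a2 : Real.exp (-1) * Real.exp 1 = 1 := by rw [← Real.exp_add]; simp
            have a3 : (2:ℝ) ≤ Real.exp 1 := by linarith [Real.add_one_le_exp (1:ℝ)]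
            have a4 : 2 * Real.exp (-1) ≤ 1 := by nlinarith [Real.exp_pos (-1)]
            have a5 : 2 * Real.exp (-((c + 2) * T (j' + 1))) ≤ Real.exp (-((c + 2) * T j')) := by
              nlinarith [Real.exp_pos (-((c + 2) * T j'))]
            have a6 := mul_le_mul_of_nonneg_left a5 hθ0.le
            linarith
        linarith
      constructor
      · have hyx8 := hyx.trans (hρ8 j')
        have hyx' := abs_le.mp hyx8
        obtain ⟨y', h1, h2⟩ := s1 y hyx8 ((hS j' j' le_rfl y (by linarith)).mp hy)
        have h1' : |y' - y| ≤ 1 / 49 := by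
          have := hexp j'
          have := Real.exp_pos (-((c + 2) * T j'))
          nlinarith
        have h1'' := abs_le.mp h1'
        refine ⟨y', (hS j j' (by omega) y' (by linarith)).mpr h2, ?_⟩
        have := abs_sub_le y' y x
        linarith
      · have sub : (Set.Ioo (x - δ) (x + δ) ∩ S j) \ S N ⊆
            {E | E ∈ Set.Ioo (x - δ) (x + δ) ∧ |D j (T j') E| ≤ 2 ∧ ¬ |D j' (T j') E| ≤ 2} ∪
            ((Set.Ioo (x - δ) (x + δ) ∩ S j') \ S N) := by
          rintro E ⟨⟨h1, h2⟩, h3⟩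
          have hE : 1 / 2 ≤ E := by linarith [h1.1]
          by_cases h4 : E ∈ S j'
          · exact Or.inr ⟨⟨h1, h4⟩, h3⟩
          · exact Or.inl ⟨h1, (hS j j' (by omega) E hE).mp h2,
              fun h5 => h4 ((hS j' j' le_rfl E hE).mpr h5)⟩
        calc _ ≤ _ := measure_mono sub
          _ ≤ _ := measure_union_le _ _
          _ ≤ _ := add_le_add s2 hvol
          _ = _ := (ENNReal.ofReal_add (by positivity) (hρ0 _)).symm
          _ ≤ _ := ENNReal.ofReal_le_ofReal hstep
  obtain ⟨⟨y, hy, hyx⟩, hvol⟩ := claim (N - n) n le_rfl (by omega)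
  have hρn : ρ n ≤ θ * δ / 2 := by
    have e1 : ρ n = 2 * (θ * Real.exp (-((c + 2) * T (n + 1)))) := by
      rw [hρ]; dsimp only; rw [if_neg (by omega)]
    have e2 := (hlow _ le_rfl).1
    have h7 := seven_le_exp (hT1 (n + 1))
    have e3 : Real.exp (-((c + 2) * T (n + 1))) * Real.exp (2 * T (n + 1)) =
        Real.exp (-(c * T (n + 1))) := by rw [← Real.exp_add]; ring_nf
    have := Real.exp_pos (-((c + 2) * T (n + 1)))
    have e4 : 4 * Real.exp (-((c + 2) * T (n + 1))) ≤ δ := by nlinarith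
    rw [e1]; nlinarith
  have hη : 0 < δ - ρ n := by nlinarith
  have h1 := useA1 n y hy (δ - ρ n) hη (by linarith [hρ0 n]) (hyx.trans (hρ8 n)) hPn
  have hyx' := abs_le.mp hyx
  have sub : S n ∩ Set.Ioo (y - (δ - ρ n)) (y + (δ - ρ n)) ⊆
      (Set.Ioo (x - δ) (x + δ) ∩ S N) ∪ ((Set.Ioo (x - δ) (x + δ) ∩ S n) \ S N) := by
    rintro E ⟨h2, h3⟩
    have h4 : E ∈ Set.Ioo (x - δ) (x + δ) := ⟨by linarith [h3.1], by linarith [h3.2]⟩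
    by_cases h5 : E ∈ S N
    · exact Or.inl ⟨h4, h5⟩
    · exact Or.inr ⟨⟨h4, h2⟩, h5⟩
  have h2 : ENNReal.ofReal (δ - ρ n) ≤
      volume (Set.Ioo (x - δ) (x + δ) ∩ S N) + ENNReal.ofReal (ρ n) :=
    h1.trans ((measure_mono sub).trans ((measure_union_le _ _).trans (add_le_add le_rfl hvol)))
  have h3 : ENNReal.ofReal (δ - ρ n) - ENNReal.ofReal (ρ n) ≤
      volume (Set.Ioo (x - δ) (x + δ) ∩ S N) := tsub_le_iff_right.mpr h2
  rw [← ENNReal.ofReal_sub _ (hρ0 n)] at h3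
  refine (ENNReal.ofReal_le_ofReal ?_).trans h3
  rw [hτ]; nlinarith
end

lemma two_le_exp {R : ℝ} (hR : 1 ≤ R) : 2 ≤ Real.exp R := by
  linarith [Real.add_one_le_exp R]

lemma const_L {Q R : ℝ} (hR : 1 ≤ R) :
    8 * Real.exp (Q * R) ^ 3 * R ≤ Real.exp ((3 * Q + 4) * R) := by
  have h1 : (8:ℝ) ≤ Real.exp R ^ 3 :=
    le_trans (by norm_num) (pow_le_pow_left₀ (by norm_num) (two_le_exp hR) 3)
  have h2 : R ≤ Real.exp R := by linarith [Real.add_one_le_exp R]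
  have h3 : Real.exp ((3 * Q + 4) * R) = Real.exp R ^ 3 * Real.exp (Q * R) ^ 3 * Real.exp R := by
    rw [← Real.exp_nat_mul, ← Real.exp_nat_mul, ← Real.exp_add, ← Real.exp_add]
    congr 1; push_cast; ring
  rw [h3]
  have := Real.exp_pos (Q * R)
  gcongr

lemma const_g {Q R x : ℝ} (hQ : 0 < Q) (hR : 1 ≤ R) (hx : 1 ≤ x) :
    Real.exp (-((6 * Q + 13) * R)) / x ^ 3 ≤
      (1 / (2 * Real.exp (Q * R) * (Q * R + 2 * x * R))) ^ 3 / 48 := by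
  have h2 : R ≤ Real.exp R := by linarith [Real.add_one_le_exp R]
  have hq : Q + 2 ≤ Real.exp ((Q + 1) * R) := by
    have := Real.add_one_le_exp ((Q + 1) * R)
    nlinarith
  have h48 : (48:ℝ) ≤ Real.exp R ^ 4 := by
    have h1 : Real.exp 1 ≤ Real.exp R := Real.exp_le_exp.mpr hR
    have h0 := Real.exp_one_gt_d9
    have h3 : (2.7:ℝ) ≤ Real.exp R := by linarith
    exact le_trans (by norm_num) (pow_le_pow_left₀ (by norm_num) h3 4)
  have hm : 2 * Real.exp (Q * R) * (Q * R + 2 * x * R) ≤ Real.exp ((2 * Q + 3) * R) * x := by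
    have a1 : Q * R + 2 * x * R ≤ (Q + 2) * R * x := by
      have : Q * R ≤ Q * R * x := le_mul_of_one_le_right (by positivity) hx
      nlinarith
    have a2 : Real.exp ((2 * Q + 3) * R) * x =
        Real.exp R * Real.exp (Q * R) * (Real.exp ((Q + 1) * R) * Real.exp R * x) := by
      rw [← Real.exp_add, ← Real.exp_add, ← mul_assoc, ← Real.exp_add]
      congr 2; ring
    rw [a2]
    have a3 : (Q + 2) * R * x ≤ Real.exp ((Q + 1) * R) * Real.exp R * x := by gcongr
    exact mul_le_mul (mul_le_mul_of_nonneg_right (two_le_exp hR) (Real.exp_pos _).le)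
      (a1.trans a3) (by positivity) (by positivity)
  have hpos : 0 < 2 * Real.exp (Q * R) * (Q * R + 2 * x * R) := by positivity
  rw [one_div, inv_pow, Real.exp_neg, div_eq_mul_inv, div_eq_mul_inv, ← mul_inv, ← mul_inv]
  apply inv_anti₀ (by positivity)
  calc (2 * Real.exp (Q * R) * (Q * R + 2 * x * R)) ^ 3 * 48
      ≤ (Real.exp ((2 * Q + 3) * R) * x) ^ 3 * Real.exp R ^ 4 := by gcongr
    _ = _ := by
      rw [mul_pow, ← Real.exp_nat_mul, ← Real.exp_nat_mul, mul_right_comm, ← Real.exp_add]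
      congr 2; push_cast; ring

theorem step_by_step_homogeneity (Q : ℝ) (hQ : 0 < Q) :
    ∃ K : ℝ, 8 ≤ K ∧
      ∀ (τ : ℝ), τ ∈ Set.Ioo (0:ℝ) 1 →
      ∀ (V : ℕ → ℝ → ℝ) (T : ℕ → ℝ) (Δ : ℕ → ℂ → ℂ),
        (∀ n, 1 ≤ T n) →
        (∀ n, ∃ k : ℕ, 0 < k ∧ T (n + 1) = (k : ℝ) * T n) →
        (∀ n, Function.Periodic (V n) (T n)) →
        (∀ n, LocallyIntegrable (fun t => (V n t) ^ 2) volume) →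
        (∀ n, besNorm (T n) (V n) ≤ Q) →
        (∀ n, IsDiscriminant (T n) (V n) (Δ n)) →
        (∀ n, specSet (Δ n) ⊆ Set.Ici (1:ℝ)) →
        Summable (fun n => (T (n + 1)) ^ 6 * Real.exp (K * T (n + 1)) *
          besNorm (T (n + 1)) (fun t => V n t - V (n + 1) t)) →
        (∑' n, (T (n + 1)) ^ 6 * Real.exp (K * T (n + 1)) *
          besNorm (T (n + 1)) (fun t => V n t - V (n + 1) t)) < (1 - τ) / (3 * K ^ 4) →
        ∀ N : ℕ, ∀ x ∈ specSet (Δ N), ∀ δ : ℝ, 0 < δ →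
          δ ≤ min (K⁻¹ * ((T 0) ^ 3)⁻¹ * Real.exp (-(K * T 0))) ((1 - τ) / 3) →
          ENNReal.ofReal (τ * δ) ≤
            volume (Set.Ioo (x - δ) (x + δ) ∩ specSet (Δ N)) := by
  refine ⟨42 * Q + 70, by linarith, ?_⟩
  intro τ hτ V T Δ hT1 hT hper hV2 hbes hdisc hspec hsum hsum_lt N x hx δ hδ0 hδ
  set K : ℝ := 42 * Q + 70 with hK
  have hK8 : 8 ≤ K := by rw [hK]; linarith
  have hTpos : ∀ n, 0 < T n := fun n => by linarith [hT1 n]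
  have hx1 : 1 ≤ x := hspec N hx
  -- measurability and integrability
  have hmeas : ∀ n R, MeasTo (V n) R := fun n R =>
    meas_all (hTpos n) (hdisc n) (hV2 n) (fun h0 => by
      have : (1:ℝ) ≤ 0 := hspec n h0
      linarith) R
  have hVint : ∀ n R, 0 ≤ R → IntervalIntegrable (V n) volume 0 R := fun n R hR =>
    sq_int_of_meas (hV2 n) hR (hmeas n R)
  have hmem : ∀ n R, MemLp (V n) 2 (volume.restrict (Set.Ioc 0 R)) := fun n R =>
    (memLp_two_iff_integrable_sq (hmeas n R)).mpr
      (((hV2 n).integrableOn_isCompact isCompact_Icc).mono_set Set.Ioc_subset_Icc_self)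
  have hdiff2 : ∀ n R, 0 ≤ R →
      IntervalIntegrable (fun t => (V n t - V (n + 1) t) ^ 2) volume 0 R := by
    intro n R hR
    rw [intervalIntegrable_iff_integrableOn_Ioc_of_le hR]
    exact ((hmem n R).sub (hmem (n + 1) R)).integrable_sq
  have hsqi : ∀ n R, 0 ≤ R → IntervalIntegrable (fun t => (V n t) ^ 2) volume 0 R := by
    intro n R hR
    rw [intervalIntegrable_iff_integrableOn_Ioc_of_le hR]
    exact (hmem n R).integrable_sq
  set b : ℕ → ℝ := fun n => besNorm (T (n + 1)) (fun t => V n t - V (n + 1) t) with hb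
  have hb0 : ∀ n, 0 ≤ b n := fun n => Real.sqrt_nonneg _
  -- L1 bounds
  have hl1 : ∀ n m, n ≤ m → ∫ t in (0:ℝ)..(T m), |V n t| ≤ Q * T m := by
    intro n m hnm
    obtain ⟨k, hk, e⟩ := period_mul hT hnm
    have h1 : ∫ t in (0:ℝ)..(T n), |V n t| ≤ T n * Q :=
      (l1_le_bes (hTpos n) (hVint n _ (hTpos n).le) (hsqi n _ (hTpos n).le)).trans
        (mul_le_mul_of_nonneg_left (hbes n) (hTpos n).le)
    have h2 := l1_period (hTpos n) (hper n) (hVint n) h1 k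
    rw [e]; refine h2.trans (le_of_eq ?_); ring
  -- fundamental systems
  choose u ud v vd hF hΔ using fun n => exists_fund (hTpos n) (hdisc n) (hVint n)
  set θ : ℝ := 1 - τ with hθ
  have hθ0 : 0 < θ := by rw [hθ]; linarith [hτ.2]
  have hθ1 : θ ≤ 1 := by rw [hθ]; linarith [hτ.1]
  have hδ1 := hδ.trans (min_le_left _ _)
  have hδ2 := hδ.trans (min_le_right _ _)
  have hKinv : K⁻¹ ≤ 1 / 8 := by
    rw [one_div]; exact inv_anti₀ (by norm_num) hK8
  have hT3 : ((T 0) ^ 3)⁻¹ ≤ 1 := inv_le_one_of_one_le₀ (one_le_pow₀ (hT1 0))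
  have hKT : K⁻¹ * ((T 0) ^ 3)⁻¹ ≤ 1 / 8 := by
    have h0 : 0 ≤ ((T 0) ^ 3)⁻¹ := by have := hTpos 0; positivity
    have h1 : 0 ≤ K⁻¹ := by positivity
    nlinarith
  have hδe : δ ≤ 1 / 8 * Real.exp (-(K * T 0)) :=
    hδ1.trans (mul_le_mul_of_nonneg_right hKT (Real.exp_pos _).le)
  have hδ8 : δ ≤ 1 / 8 := by
    have : Real.exp (-(K * T 0)) ≤ 1 := Real.exp_le_one_iff.mpr (by nlinarith [hTpos 0])
    linarith
  have hδT : δ * Real.exp ((3 * Q + 4) * T 0) ≤ 1 := by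
    have h1 : Real.exp ((3 * Q + 4) * T 0) ≤ Real.exp (K * T 0) :=
      Real.exp_le_exp.mpr (by rw [hK]; nlinarith [hTpos 0])
    have h2 : Real.exp (-(K * T 0)) * Real.exp (K * T 0) = 1 := by rw [← Real.exp_add]; simp
    have h3 := Real.exp_pos (K * T 0)
    calc δ * Real.exp ((3 * Q + 4) * T 0)
        ≤ (1 / 8 * Real.exp (-(K * T 0))) * Real.exp (K * T 0) :=
          mul_le_mul hδe h1 (Real.exp_pos _).le (by positivity)
      _ ≤ 1 := by rw [mul_assoc, h2]; norm_num
  refine main_abs (c := 3 * Q + 4) (γ₀ := 6 * Q + 13) (γ := 24 * Q + 37) (θ := θ) (K := K)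
    (T := T) (S := fun n => specSet (Δ n)) (D := fun n R E => u n E R + vd n E R)
    hT1 hT (by linarith) (by linarith) (by ring) (by rw [hK]; ring) (by rw [hθ]; ring) hθ1 hδ0 hδ8
    (by linarith) hδT hx1 hx ?_ ?_ ?_
  · intro n m hnm E hE
    obtain ⟨k, hk, e⟩ := period_mul hT hnm
    have h1 := trace_period (hTpos n) (hper n) (fun R hR => hF n R hR E hE) hk
    show ‖Δ n (E : ℂ)‖ ≤ 2 ↔ |u n E (T m) + vd n E (T m)| ≤ 2
    rw [hΔ n E hE, e]
    exact h1.symm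
  · intro n m hnm
    have hTm := hTpos m
    obtain ⟨D', r⟩ := family_DReg (hT1 m) (show 0 ≤ Q * T m by positivity) hx1
      (hVint n (T m) hTm.le) (hl1 n m hnm) (fun E hE => hF n (T m) hTm.le E hE)
    refine ⟨D', r.weaken ?_ (const_g hQ (hT1 m) hx1)⟩
    exact div_le_div_of_nonneg_right (const_L (hT1 m)) (Real.sqrt_nonneg _)
  · intro j j' hjj' hTj E hE
    have hTp := hTpos j'
    have hTeq : ∀ i, j ≤ i → i < j' → T (i + 1) = T j' := by
      intro i h1 h2
      exact le_antisymm (period_mono hT1 hT (by omega))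
        (by rw [hTj]; exact period_mono hT1 hT (by omega))
    have hchain := l1_chain (V := V) (b := b) hTp.le (fun n => hVint n _ hTp.le) hjj'.le (by
      intro i h1 h2
      have h3 := l1_le_bes (hTpos (i + 1))
        ((hVint i _ (hTpos (i + 1)).le).sub (hVint (i + 1) _ (hTpos (i + 1)).le))
        (hdiff2 i _ (hTpos (i + 1)).le)
      rw [hb]; dsimp only
      rw [hTeq i h1 h2] at h3 ⊢
      exact h3)
    have hsumb : ∑ i ∈ Finset.Ico j j', b i ≤ θ * Real.exp (-(K * T j')) := by
      have h1 : ∀ i ∈ Finset.Ico j j', b i ≤ Real.exp (-(K * T j')) *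
          ((T (i + 1)) ^ 6 * Real.exp (K * T (i + 1)) * b i) := by
        intro i hi
        rw [Finset.mem_Ico] at hi
        rw [hTeq i hi.1 hi.2]
        have e : Real.exp (-(K * T j')) * ((T j') ^ 6 * Real.exp (K * T j') * b i) =
            (Real.exp (-(K * T j')) * Real.exp (K * T j')) * ((T j') ^ 6 * b i) := by ring
        rw [e, ← Real.exp_add, neg_add_cancel, Real.exp_zero, one_mul]
        exact le_mul_of_one_le_left (hb0 i) (one_le_pow₀ (hT1 j'))
      have h2 := hsum.sum_le_tsum (Finset.Ico j j') (fun i _ => by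
        have := hb0 i
        have := hTpos (i + 1)
        positivity)
      have h3 : θ / (3 * K ^ 4) ≤ θ := by
        apply div_le_self hθ0.le
        have : (1:ℝ) ≤ K ^ 4 := one_le_pow₀ (by linarith)
        linarith
      calc ∑ i ∈ Finset.Ico j j', b i ≤ _ := Finset.sum_le_sum h1
        _ = Real.exp (-(K * T j')) * _ := (Finset.mul_sum _ _ _).symm
        _ ≤ Real.exp (-(K * T j')) * θ :=
          mul_le_mul_of_nonneg_left (h2.trans (hsum_lt.le.trans h3)) (Real.exp_pos _).le
        _ = _ := mul_comm _ _
    have hω : (1:ℝ) / 2 ≤ Real.sqrt E := by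
      apply Real.le_sqrt_of_sq_le
      linarith
    have htr := Fund.trace_diff_le (hF j (T j') hTp.le E hE) (hF j' (T j') hTp.le E hE)
      (hVint j _ hTp.le) (hVint j' _ hTp.le) hTp.le (hl1 j j' hjj'.le) (hl1 j' j' le_rfl)
      hE hE (by norm_num : (0:ℝ) < 1 / 2) hω hω
    have e1 : ∀ s, V j s - E - (V j' s - E) = V j s - V j' s := fun s => by ring
    simp only [e1] at htr
    refine htr.trans ?_
    calc 4 * Real.exp (Q * T j') ^ 3 / (1 / 2) * ∫ s in (0:ℝ)..(T j'), |V j s - V j' s|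
        ≤ 4 * Real.exp (Q * T j') ^ 3 / (1 / 2) * (T j' * (θ * Real.exp (-(K * T j')))) := by
          apply mul_le_mul_of_nonneg_left _ (by positivity)
          exact hchain.trans (mul_le_mul_of_nonneg_left hsumb hTp.le)
      _ = (8 * Real.exp (Q * T j') ^ 3 * T j') * (θ * Real.exp (-(K * T j'))) := by ring
      _ ≤ Real.exp ((3 * Q + 4) * T j') * (θ * Real.exp (-(K * T j'))) :=
          mul_le_mul_of_nonneg_right (const_L (hT1 j')) (by positivity)
      _ = θ * Real.exp ((3 * Q + 4) * T j' - K * T j') := by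
          rw [sub_eq_add_neg, Real.exp_add]; ring
end
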